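/- arXiv:0905.3827 — 3 statements merged into one kernel-verified Lean document; each statement's English description precedes it below -/
import Mathlib

section
/- Let L be a finitely related left P_k(E)-module, i.e. there is an exact sequence 0 → N → F → L → 0 of P_k(E)-modules with F free and N finitely generated. Then L contains a projective P_k(E)-submodule Q such that L/Q is finite-dimensional over k. Moreover, if L is finitely presented then Q can be chosen finitely generated. -/
namespace LPA

/-- A finite quiver: finite sets of vertices and arrows with source and target maps. -/
structure FinQuiver : Type 1 where
  V : Type
  A : Type
  [fintypeV : Fintype V]
  [decEqV : DecidableEq V]
  [fintypeA : Fintype A]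
  [decEqA : DecidableEq A]
  src : A → V
  tgt : A → V

attribute [instance] FinQuiver.fintypeV FinQuiver.decEqV FinQuiver.fintypeA FinQuiver.decEqA

/-- The inverse quiver: all arrows reversed. -/
def FinQuiver.rev (Q : FinQuiver) : FinQuiver where
  V := Q.V
  A := Q.A
  fintypeV := Q.fintypeV
  decEqV := Q.decEqV
  fintypeA := Q.fintypeA
  decEqA := Q.decEqA
  src := Q.tgt
  tgt := Q.src

/-- Generators of the path algebra: a trivial path `p v` for each vertex and an arrow `e` for
each arrow. -/
inductive PathGen (Q : FinQuiver) : Type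
  | vertex (v : Q.V) : PathGen Q
  | edge (e : Q.A) : PathGen Q

/-- Defining relations of the path algebra: the trivial paths are pairwise orthogonal
idempotents summing to `1`, and `p (src e) * e = e = e * p (tgt e)`. -/
inductive PathRel (k : Type) [CommRing k] (Q : FinQuiver) :
    FreeAlgebra k (PathGen Q) → FreeAlgebra k (PathGen Q) → Prop
  | vertex_mul_self (v : Q.V) :
      PathRel k Q (FreeAlgebra.ι k (PathGen.vertex v) * FreeAlgebra.ι k (PathGen.vertex v))
        (FreeAlgebra.ι k (PathGen.vertex v))
  | vertex_mul_ne (v w : Q.V) (h : v ≠ w) :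
      PathRel k Q (FreeAlgebra.ι k (PathGen.vertex v) * FreeAlgebra.ι k (PathGen.vertex w)) 0
  | sum_vertex :
      PathRel k Q (∑ v : Q.V, FreeAlgebra.ι k (PathGen.vertex v)) 1
  | src_mul (e : Q.A) :
      PathRel k Q
        (FreeAlgebra.ι k (PathGen.vertex (Q.src e)) * FreeAlgebra.ι k (PathGen.edge e))
        (FreeAlgebra.ι k (PathGen.edge e))
  | mul_tgt (e : Q.A) :
      PathRel k Q
        (FreeAlgebra.ι k (PathGen.edge e) * FreeAlgebra.ι k (PathGen.vertex (Q.tgt e)))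
        (FreeAlgebra.ι k (PathGen.edge e))

/-- The path algebra `P_k(Q)` of a finite quiver `Q`, presented by generators and relations. -/
def PathAlg (k : Type) [CommRing k] (Q : FinQuiver) : Type :=
  RingQuot (PathRel k Q)

variable (k : Type) [CommRing k] (Q : FinQuiver)

noncomputable instance : Ring (PathAlg k Q) :=
  inferInstanceAs (Ring (RingQuot (PathRel k Q)))

noncomputable instance : Algebra k (PathAlg k Q) :=
  inferInstanceAs (Algebra k (RingQuot (PathRel k Q)))

/-- The quotient map from the free algebra onto the path algebra. -/
noncomputable def PathAlg.mk : FreeAlgebra k (PathGen Q) →ₐ[k] PathAlg k Q :=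
  RingQuot.mkAlgHom k (PathRel k Q)

/-- The trivial path (vertex idempotent) `p v` in the path algebra. -/
noncomputable def PathAlg.p (v : Q.V) : PathAlg k Q :=
  PathAlg.mk k Q (FreeAlgebra.ι k (PathGen.vertex v))

/-- The arrow `e` in the path algebra. -/
noncomputable def PathAlg.arrow (e : Q.A) : PathAlg k Q :=
  PathAlg.mk k Q (FreeAlgebra.ι k (PathGen.edge e))

theorem PathAlg.mk_rel {x y : FreeAlgebra k (PathGen Q)} (h : PathRel k Q x y) :
    PathAlg.mk k Q x = PathAlg.mk k Q y :=
  RingQuot.mkAlgHom_rel k h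

theorem PathAlg.p_mul_self (v : Q.V) : PathAlg.p k Q v * PathAlg.p k Q v = PathAlg.p k Q v := by
  have h := PathAlg.mk_rel k Q (PathRel.vertex_mul_self v)
  simpa [map_mul, PathAlg.p] using h

theorem PathAlg.p_mul_ne (v w : Q.V) (hvw : v ≠ w) :
    PathAlg.p k Q v * PathAlg.p k Q w = 0 := by
  have h := PathAlg.mk_rel k Q (PathRel.vertex_mul_ne v w hvw)
  simpa [map_mul, PathAlg.p] using h

theorem PathAlg.sum_p : (∑ v : Q.V, PathAlg.p k Q v) = 1 := by
  have h := PathAlg.mk_rel k Q (PathRel.sum_vertex)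
  simpa [map_sum, PathAlg.p] using h

theorem PathAlg.arrow_mul_tgt (e : Q.A) :
    PathAlg.arrow k Q e * PathAlg.p k Q (Q.tgt e) = PathAlg.arrow k Q e := by
  have h := PathAlg.mk_rel k Q (PathRel.mul_tgt e)
  simpa [map_mul, PathAlg.p, PathAlg.arrow] using h

theorem PathAlg.src_mul_arrow (e : Q.A) :
    PathAlg.p k Q (Q.src e) * PathAlg.arrow k Q e = PathAlg.arrow k Q e := by
  have h := PathAlg.mk_rel k Q (PathRel.src_mul e)
  simpa [map_mul, PathAlg.p, PathAlg.arrow] using h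

/-- The set of vertices `{p v | v ∈ Q.V}` of the path algebra, as a finite set. -/
noncomputable def vertexFinset : Finset (PathAlg k Q) :=
  letI := Classical.decEq (PathAlg k Q)
  Finset.univ.image (PathAlg.p k Q)

end LPA

namespace LPA

section Aux

variable {k : Type} [Field k] {Q : FinQuiver}

theorem gen_ind (T : Submodule k (PathAlg k Q)) (h1 : (1 : PathAlg k Q) ∈ T)
    (hp : ∀ v x, x ∈ T → PathAlg.p k Q v * x ∈ T)
    (he : ∀ e x, x ∈ T → PathAlg.arrow k Q e * x ∈ T) (a : PathAlg k Q) : a ∈ T := by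
  have key : ∀ b : FreeAlgebra k (PathGen Q), ∀ x ∈ T, PathAlg.mk k Q b * x ∈ T := by
    intro b
    induction b using FreeAlgebra.induction with
    | grade0 r =>
      intro x hx
      rw [AlgHom.commutes, ← Algebra.smul_def]
      exact T.smul_mem _ hx
    | grade1 g =>
      intro x hx
      cases g with
      | vertex v => exact hp v x hx
      | edge e => exact he e x hx
    | mul a b ha hb =>
      intro x hx
      rw [map_mul, mul_assoc]
      exact ha _ (hb _ hx)
    | add a b ha hb =>
      intro x hx
      rw [map_add, add_mul]
      exact T.add_mem (ha _ hx) (hb _ hx)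
  obtain ⟨b, rfl⟩ := RingQuot.mkAlgHom_surjective k (PathRel k Q) a
  have := key b 1 h1
  rw [mul_one] at this
  exact this

theorem p_mul (v w : Q.V) : PathAlg.p k Q v * PathAlg.p k Q w =
    if v = w then PathAlg.p k Q v else 0 := by
  split_ifs with h
  · subst h; exact PathAlg.p_mul_self k Q v
  · exact PathAlg.p_mul_ne k Q v w h

theorem p_mul_arrow (v : Q.V) (e : Q.A) : PathAlg.p k Q v * PathAlg.arrow k Q e =
    if v = Q.src e then PathAlg.arrow k Q e else 0 := by
  rw [← PathAlg.src_mul_arrow, ← mul_assoc, p_mul]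
  split_ifs with h
  · rw [h]
  · simp

theorem arrow_mul_p (v : Q.V) (e : Q.A) : PathAlg.arrow k Q e * PathAlg.p k Q v =
    if Q.tgt e = v then PathAlg.arrow k Q e else 0 := by
  rw [← PathAlg.arrow_mul_tgt, mul_assoc, p_mul]
  split_ifs with h
  · rfl
  · simp

/-- Images of the generators under the triangular representation attached to `e`. -/
noncomputable def triGen (k : Type) [Field k] (Q : FinQuiver) (e : Q.A) :
    PathGen Q → Matrix (Fin 2) (Fin 2) (PathAlg k Q)
  | .vertex v => !![if v = Q.src e then 1 else 0, 0; 0, PathAlg.p k Q v]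
  | .edge f => !![0, if f = e then PathAlg.p k Q (Q.tgt e) else 0; 0, PathAlg.arrow k Q f]

theorem triGen_rel (e : Q.A) ⦃x y : FreeAlgebra k (PathGen Q)⦄ (h : PathRel k Q x y) :
    FreeAlgebra.lift k (triGen k Q e) x = FreeAlgebra.lift k (triGen k Q e) y := by
  cases h with
  | vertex_mul_self v =>
    simp only [map_mul, FreeAlgebra.lift_ι_apply, triGen, Matrix.mul_fin_two]
    simp only [PathAlg.p_mul_self, mul_zero, zero_mul, add_zero, zero_add]
    split_ifs <;> simp
  | vertex_mul_ne v w h =>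
    simp only [map_mul, FreeAlgebra.lift_ι_apply, triGen, Matrix.mul_fin_two, map_zero]
    simp only [PathAlg.p_mul_ne _ _ _ _ h, mul_zero, zero_mul, add_zero, zero_add]
    have : (if v = Q.src e then (1 : PathAlg k Q) else 0) * (if w = Q.src e then 1 else 0) = 0 := by
      split_ifs with h1 h2
      · exact absurd (h1.trans h2.symm) h
      all_goals simp
    rw [this]
    ext i j
    fin_cases i <;> fin_cases j <;> simp
  | sum_vertex =>
    ext i j
    fin_cases i <;> fin_cases j <;>
      simp [triGen, Matrix.sum_apply, PathAlg.sum_p]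
  | src_mul f =>
    simp only [map_mul, FreeAlgebra.lift_ι_apply, triGen, Matrix.mul_fin_two]
    simp only [PathAlg.src_mul_arrow, mul_zero, zero_mul, add_zero, zero_add]
    by_cases h : f = e
    · subst h; simp
    · simp [h]
  | mul_tgt f =>
    simp only [map_mul, FreeAlgebra.lift_ι_apply, triGen, Matrix.mul_fin_two]
    simp only [PathAlg.arrow_mul_tgt, mul_zero, zero_mul, add_zero, zero_add]
    by_cases h : f = e
    · subst h; simp [PathAlg.p_mul_self]
    · simp [h]

/-- The triangular representation. -/
noncomputable def tri (k : Type) [Field k] (Q : FinQuiver) (e : Q.A) :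
    PathAlg k Q →ₐ[k] Matrix (Fin 2) (Fin 2) (PathAlg k Q) :=
  RingQuot.liftAlgHom k ⟨FreeAlgebra.lift k (triGen k Q e), triGen_rel e⟩

theorem tri_p (e : Q.A) (v : Q.V) : tri k Q e (PathAlg.p k Q v) =
    !![if v = Q.src e then 1 else 0, 0; 0, PathAlg.p k Q v] := by
  have h : tri k Q e (PathAlg.p k Q v) =
      FreeAlgebra.lift k (triGen k Q e) (FreeAlgebra.ι k (PathGen.vertex v)) :=
    RingQuot.liftAlgHom_mkAlgHom_apply k (FreeAlgebra.lift k (triGen k Q e)) (triGen_rel e) _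
  rw [h, FreeAlgebra.lift_ι_apply]; rfl

theorem tri_arrow (e f : Q.A) : tri k Q e (PathAlg.arrow k Q f) =
    !![0, if f = e then PathAlg.p k Q (Q.tgt e) else 0; 0, PathAlg.arrow k Q f] := by
  have h : tri k Q e (PathAlg.arrow k Q f) =
      FreeAlgebra.lift k (triGen k Q e) (FreeAlgebra.ι k (PathGen.edge f)) :=
    RingQuot.liftAlgHom_mkAlgHom_apply k (FreeAlgebra.lift k (triGen k Q e)) (triGen_rel e) _
  rw [h, FreeAlgebra.lift_ι_apply]; rfl

/-- The left derivative along the arrow `e`. -/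
noncomputable def der (k : Type) [Field k] (Q : FinQuiver) (e : Q.A) :
    PathAlg k Q →ₗ[k] PathAlg k Q where
  toFun a := tri k Q e a 0 1
  map_add' a b := by simp
  map_smul' r a := by simp

theorem tri_snd (e : Q.A) (a : PathAlg k Q) : tri k Q e a 1 1 = a := by
  let T : Submodule k (PathAlg k Q) :=
    { carrier := {a | tri k Q e a 1 1 = a}
      add_mem' := by intro a b ha hb; simp_all
      zero_mem' := by simp
      smul_mem' := by intro r a ha; simp_all }
  refine gen_ind T ?_ ?_ ?_ a
  · change tri k Q e 1 1 1 = 1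
    simp
  · intro v x hx
    change tri k Q e _ 1 1 = _
    change tri k Q e _ 1 1 = _ at hx
    rw [map_mul, tri_p, Matrix.mul_apply, Fin.sum_univ_two, hx]
    simp
  · intro f x hx
    change tri k Q e _ 1 1 = _
    change tri k Q e _ 1 1 = _ at hx
    rw [map_mul, tri_arrow, Matrix.mul_apply, Fin.sum_univ_two, hx]
    simp

theorem der_p_mul (e : Q.A) (v : Q.V) (b : PathAlg k Q) :
    der k Q e (PathAlg.p k Q v * b) = if v = Q.src e then der k Q e b else 0 := by
  change tri k Q e _ 0 1 = if v = Q.src e then tri k Q e b 0 1 else 0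
  rw [map_mul, tri_p, Matrix.mul_apply, Fin.sum_univ_two]
  simp

theorem der_arrow_mul (e f : Q.A) (b : PathAlg k Q) :
    der k Q e (PathAlg.arrow k Q f * b) = if f = e then PathAlg.p k Q (Q.tgt e) * b else 0 := by
  change tri k Q e _ 0 1 = _
  rw [map_mul, tri_arrow, Matrix.mul_apply, Fin.sum_univ_two, tri_snd]
  simp

theorem der_mul_p (e : Q.A) (v : Q.V) (b : PathAlg k Q) :
    der k Q e (b * PathAlg.p k Q v) = der k Q e b * PathAlg.p k Q v := by
  change tri k Q e _ 0 1 = tri k Q e b 0 1 * _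
  rw [map_mul, tri_p, Matrix.mul_apply, Fin.sum_univ_two]
  simp

theorem der_one (e : Q.A) : der k Q e 1 = 0 := by
  change tri k Q e _ 0 1 = 0
  simp

/-- The span of the vertices. -/
noncomputable def Sp (k : Type) [Field k] (Q : FinQuiver) : Submodule k (PathAlg k Q) :=
  Submodule.span k (Set.range (PathAlg.p k Q))

theorem Sp_p_mul (v : Q.V) (x : PathAlg k Q) (hx : x ∈ Sp k Q) : PathAlg.p k Q v * x ∈ Sp k Q := by
  induction hx using Submodule.span_induction with
  | mem x h =>
    obtain ⟨w, rfl⟩ := h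
    rw [p_mul]
    split_ifs
    · exact Submodule.subset_span ⟨v, rfl⟩
    · exact zero_mem _
  | zero => simp
  | add x y _ _ hx hy => rw [mul_add]; exact add_mem hx hy
  | smul r x _ hx => rw [mul_smul_comm]; exact Submodule.smul_mem _ _ hx

theorem decomp (a : PathAlg k Q) :
    a - ∑ e, PathAlg.arrow k Q e * der k Q e a ∈ Sp k Q := by
  let φ : PathAlg k Q →ₗ[k] PathAlg k Q :=
    LinearMap.id - ∑ e, (LinearMap.mulLeft k (PathAlg.arrow k Q e)).comp (der k Q e)
  have hφ : ∀ a, φ a = a - ∑ e, PathAlg.arrow k Q e * der k Q e a := by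
    intro a; simp [φ]
  rw [← hφ]
  refine gen_ind ((Sp k Q).comap φ) ?_ ?_ ?_ a
  · rw [Submodule.mem_comap, hφ]
    simp only [der_one, mul_zero, Finset.sum_const_zero, sub_zero]
    rw [← PathAlg.sum_p]
    exact sum_mem fun v _ => Submodule.subset_span ⟨v, rfl⟩
  · intro v x hx
    rw [Submodule.mem_comap, hφ] at hx ⊢
    convert Sp_p_mul v _ hx using 1
    rw [mul_sub, Finset.mul_sum]
    congr 1
    refine Finset.sum_congr rfl fun e _ => ?_
    rw [der_p_mul, ← mul_assoc, p_mul_arrow]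
    split_ifs <;> simp
  · intro f x hx
    rw [Submodule.mem_comap, hφ]
    have : PathAlg.arrow k Q f * x - ∑ e, PathAlg.arrow k Q e *
        der k Q e (PathAlg.arrow k Q f * x) = 0 := by
      simp [der_arrow_mul, ← mul_assoc, PathAlg.arrow_mul_tgt]
    rw [this]
    exact zero_mem _

theorem p_mul_der (e : Q.A) (a : PathAlg k Q) :
    PathAlg.p k Q (Q.tgt e) * der k Q e a = der k Q e a := by
  refine gen_ind (LinearMap.eqLocus
    ((LinearMap.mulLeft k (PathAlg.p k Q (Q.tgt e))).comp (der k Q e)) (der k Q e)) ?_ ?_ ?_ a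
  · simp [der_one]
  · intro v x hx
    simp only [LinearMap.mem_eqLocus, LinearMap.comp_apply, LinearMap.mulLeft_apply] at hx ⊢
    rw [der_p_mul]
    split_ifs <;> simp [hx]
  · intro v x hx
    simp only [LinearMap.mem_eqLocus, LinearMap.comp_apply, LinearMap.mulLeft_apply] at hx ⊢
    rw [der_arrow_mul]
    split_ifs <;> simp [← mul_assoc, PathAlg.p_mul_self]

/-- The degree filtration, shifted by one. -/
noncomputable def Dg (k : Type) [Field k] (Q : FinQuiver) : ℕ → Submodule k (PathAlg k Q)
  | 0 => ⊥
  | n + 1 => ⨅ e, (Dg k Q n).comap (der k Q e)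

theorem mem_Dg_succ (n : ℕ) (a : PathAlg k Q) :
    a ∈ Dg k Q (n + 1) ↔ ∀ e, der k Q e a ∈ Dg k Q n := by
  simp [Dg, Submodule.mem_iInf]

theorem Dg_le_succ (n : ℕ) : Dg k Q n ≤ Dg k Q (n + 1) := by
  induction n with
  | zero => simp [Dg]
  | succ n ih =>
    intro a ha
    rw [mem_Dg_succ] at ha ⊢
    exact fun e => ih (ha e)

theorem Dg_mono : Monotone (Dg k Q) := monotone_nat_of_le_succ Dg_le_succ

theorem Dg_p_mul (n : ℕ) (v : Q.V) (a : PathAlg k Q) (ha : a ∈ Dg k Q n) :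
    PathAlg.p k Q v * a ∈ Dg k Q n := by
  cases n with
  | zero => simp_all [Dg]
  | succ n =>
    rw [mem_Dg_succ] at ha ⊢
    intro e
    rw [der_p_mul]
    split_ifs
    · exact ha e
    · exact zero_mem _

theorem Dg_arrow_mul (n : ℕ) (f : Q.A) (a : PathAlg k Q) (ha : a ∈ Dg k Q n) :
    PathAlg.arrow k Q f * a ∈ Dg k Q (n + 1) := by
  rw [mem_Dg_succ]
  intro e
  rw [der_arrow_mul]
  split_ifs
  · exact Dg_p_mul _ _ _ ha
  · exact zero_mem _

theorem one_mem_Dg : (1 : PathAlg k Q) ∈ Dg k Q 1 := by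
  rw [mem_Dg_succ]; simp [der_one]

theorem exists_Dg (a : PathAlg k Q) : ∃ n, a ∈ Dg k Q n := by
  have := gen_ind (⨆ n, Dg k Q n) ?_ ?_ ?_ a
  · rwa [Submodule.mem_iSup_of_directed _ Dg_mono.directed_le] at this
  · exact Submodule.mem_iSup_of_mem 1 one_mem_Dg
  · intro v x hx
    rw [Submodule.mem_iSup_of_directed _ Dg_mono.directed_le] at hx ⊢
    obtain ⟨n, hn⟩ := hx
    exact ⟨n, Dg_p_mul _ _ _ hn⟩
  · intro v x hx
    rw [Submodule.mem_iSup_of_directed _ Dg_mono.directed_le] at hx ⊢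
    obtain ⟨n, hn⟩ := hx
    exact ⟨n + 1, Dg_arrow_mul _ _ _ hn⟩

instance Dg_finite (n : ℕ) : FiniteDimensional k (Dg k Q n) := by
  induction n with
  | zero => change FiniteDimensional k (⊥ : Submodule k (PathAlg k Q)); infer_instance
  | succ n ih =>
    have h1 : FiniteDimensional k (Sp k Q) :=
      FiniteDimensional.span_of_finite k (Set.finite_range _)
    have : Dg k Q (n + 1) ≤ Sp k Q ⊔
        ⨆ e, (Dg k Q n).map (LinearMap.mulLeft k (PathAlg.arrow k Q e)) := by
      intro a ha
      rw [mem_Dg_succ] at ha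
      rw [← sub_add_cancel a (∑ e, PathAlg.arrow k Q e * der k Q e a)]
      refine Submodule.add_mem_sup (decomp a) (sum_mem fun e _ => ?_)
      exact Submodule.mem_iSup_of_mem e ⟨_, ha e, rfl⟩
    exact Submodule.finiteDimensional_of_le this

end Aux

end LPA

namespace LPA

section Aux2

variable {k : Type} [Field k] {Q : FinQuiver}

theorem Sp_mul_p (v : Q.V) (x : PathAlg k Q) (hx : x ∈ Sp k Q) :
    ∃ r : k, x * PathAlg.p k Q v = r • PathAlg.p k Q v := by
  induction hx using Submodule.span_induction with
  | mem x h =>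
    obtain ⟨w, rfl⟩ := h
    rw [p_mul]
    split_ifs with h
    · subst h; exact ⟨1, by simp⟩
    · exact ⟨0, by simp⟩
  | zero => exact ⟨0, by simp⟩
  | add x y _ _ hx hy =>
    obtain ⟨r, hr⟩ := hx
    obtain ⟨s, hs⟩ := hy
    exact ⟨r + s, by rw [add_mul, hr, hs, add_smul]⟩
  | smul r x _ hx =>
    obtain ⟨s, hs⟩ := hx
    exact ⟨r * s, by rw [smul_mul_assoc, hs, smul_smul]⟩

theorem decomp_right (v : Q.V) (a : PathAlg k Q) (ha : a * PathAlg.p k Q v = a) :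
    ∃ r : k, a = (∑ e, PathAlg.arrow k Q e * der k Q e a) + r • PathAlg.p k Q v := by
  obtain ⟨r, hr⟩ := Sp_mul_p v _ (decomp a)
  refine ⟨r, ?_⟩
  rw [← hr, sub_mul, ha, Finset.sum_mul]
  have : ∀ e, PathAlg.arrow k Q e * der k Q e a * PathAlg.p k Q v =
      PathAlg.arrow k Q e * der k Q e a := by
    intro e
    rw [mul_assoc, ← der_mul_p, ha]
  simp [this]

variable {L : Type} [AddCommGroup L] [Module (PathAlg k Q) L] [Module k L]
  [IsScalarTower k (PathAlg k Q) L]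

theorem exists_rel_compl {M : Type} [AddCommGroup M] [Module k M] (A B : Submodule k M)
    (h : A ≤ B) : ∃ W : Submodule k M, W ≤ B ∧ Disjoint A W ∧ A ⊔ W = B := by
  obtain ⟨C, hC⟩ := exists_isCompl A
  refine ⟨C ⊓ B, inf_le_right, hC.disjoint.mono_right inf_le_left, ?_⟩
  rw [← sup_inf_assoc_of_le _ h, hC.sup_eq_top, top_inf_eq]

theorem exists_family (A B : Submodule k L) (hAB : A ≤ B) [FiniteDimensional k B]
    (hA : ∀ v, ∀ x ∈ A, PathAlg.p k Q v • x ∈ A) (hB : ∀ v, ∀ x ∈ B, PathAlg.p k Q v • x ∈ B) :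
    ∃ (J : Type) (_ : Fintype J) (v : J → Q.V) (w : J → L),
      (∀ j, PathAlg.p k Q (v j) • w j = w j) ∧ (∀ j, w j ∈ B) ∧
      (∀ r : J → k, ∑ j, r j • w j ∈ A → r = 0) ∧
      B ≤ A ⊔ Submodule.span k (Set.range w) := by
  let f : Q.V → L →ₗ[k] L := fun v => Algebra.lsmul k k L (PathAlg.p k Q v)
  have hf : ∀ v x, f v x = PathAlg.p k Q v • x := fun v x => rfl
  have hsm : ∀ (r : k) (v) (x : L), PathAlg.p k Q v • r • x = r • PathAlg.p k Q v • x := by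
    intro r v x; rw [← hf, map_smul, hf]
  choose W hWB hWd hWs using fun v =>
    exists_rel_compl (A.map (f v)) (B.map (f v)) (Submodule.map_mono hAB)
  have hBm : ∀ v, B.map (f v) ≤ B := by
    rintro v _ ⟨x, hx, rfl⟩; exact hB v x hx
  have hAm : ∀ v, A.map (f v) ≤ A := by
    rintro v _ ⟨x, hx, rfl⟩; exact hA v x hx
  have hfd : ∀ v, FiniteDimensional k (W v) := fun v =>
    Submodule.finiteDimensional_of_le ((hWB v).trans (hBm v))
  have hpW : ∀ v, ∀ x ∈ W v, PathAlg.p k Q v • x = x := by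
    intro v x hx
    obtain ⟨y, _, rfl⟩ := hWB v hx
    rw [hf, smul_smul, PathAlg.p_mul_self]
  let b := fun v => Module.finBasis k (W v)
  let J := Σ v : Q.V, Fin (Module.finrank k (W v))
  let w : J → L := fun j => (b j.1 j.2 : L)
  refine ⟨J, inferInstance, Sigma.fst, w, fun j => hpW _ _ (b j.1 j.2).2,
    fun j => hBm _ (hWB _ (b j.1 j.2).2), ?_, ?_⟩
  · intro r hr
    have key : ∀ v, ∑ i, r ⟨v, i⟩ • b v i = 0 := by
      intro v
      have h1 : f v (∑ j, r j • w j) = ((∑ i, r ⟨v, i⟩ • b v i : W v) : L) := by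
        rw [map_sum, Fintype.sum_sigma, Finset.sum_eq_single v]
        · rw [AddSubmonoidClass.coe_finsetSum]
          refine Finset.sum_congr rfl fun i _ => ?_
          rw [map_smul, hf]
          exact congrArg _ (hpW _ _ (b v i).2)
        · intro u _ hu
          refine Finset.sum_eq_zero fun i _ => ?_
          rw [map_smul, hf]
          have : w ⟨u, i⟩ = PathAlg.p k Q u • w ⟨u, i⟩ := (hpW _ _ (b u i).2).symm
          rw [this, smul_smul, PathAlg.p_mul_ne _ _ _ _ hu.symm, zero_smul, smul_zero]
        · simp
      have h2 := Submodule.disjoint_def.1 (hWd v) _ ⟨_, hr, h1⟩ (Subtype.mem _)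
      exact Subtype.ext h2
    funext j
    exact Fintype.linearIndependent_iff.1 (b j.1).linearIndependent (fun i => r ⟨j.1, i⟩)
      (key j.1) j.2
  · intro x hx
    have h1 : x = ∑ v, f v x := by
      simp only [hf]
      rw [← Finset.sum_smul, PathAlg.sum_p, one_smul]
    rw [h1]
    refine sum_mem fun v _ => ?_
    have h2 : f v x ∈ A.map (f v) ⊔ W v := by
      rw [hWs]; exact ⟨x, hx, rfl⟩
    refine (sup_le_sup (hAm v) ?_) h2
    intro y hy
    have h3 := (b v).sum_repr ⟨y, hy⟩
    have h4 : y = ∑ i, (b v).repr ⟨y, hy⟩ i • w ⟨v, i⟩ := by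
      conv_lhs => rw [← Subtype.coe_mk y hy, ← h3]
      rw [AddSubmonoidClass.coe_finsetSum]
      rfl
    rw [h4]
    exact sum_mem fun i _ => Submodule.smul_mem _ _ (Submodule.subset_span ⟨_, rfl⟩)

theorem indep (A B : Submodule k L) (hAB : A ≤ B)
    (hC : ∀ l : Q.A → L, ∑ e, PathAlg.arrow k Q e • l e ∈ B →
      ∀ e, PathAlg.p k Q (Q.tgt e) • l e ∈ A)
    {J : Type} [Fintype J] (v : J → Q.V) (w : J → L)
    (hw : ∀ j, PathAlg.p k Q (v j) • w j = w j) (hwB : ∀ j, w j ∈ B)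
    (hwi : ∀ r : J → k, ∑ j, r j • w j ∈ A → r = 0) (n : ℕ) :
    ∀ a : J → PathAlg k Q, (∀ j, a j ∈ Dg k Q n) → (∀ j, a j * PathAlg.p k Q (v j) = a j) →
      ∑ j, a j • w j ∈ A → ∀ j, a j = 0 := by
  induction n with
  | zero => intro a ha _ _ j; simpa [Dg] using ha j
  | succ n ih =>
    intro a ha hap hsum
    choose r hr using fun j => decomp_right (v j) (a j) (hap j)
    have h1 : ∑ j, a j • w j = (∑ e, PathAlg.arrow k Q e • ∑ j, der k Q e (a j) • w j) +
        ∑ j, r j • w j := by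
      simp only [Finset.smul_sum, smul_smul]
      rw [Finset.sum_comm, ← Finset.sum_add_distrib]
      refine Finset.sum_congr rfl fun j _ => ?_
      conv_lhs => rw [hr j]
      rw [add_smul, Finset.sum_smul, smul_assoc, hw]
    have h2 : ∑ j, r j • w j ∈ B := sum_mem fun j _ => B.smul_mem _ (hwB j)
    have h3 : ∑ e, PathAlg.arrow k Q e • ∑ j, der k Q e (a j) • w j ∈ B := by
      rw [h1] at hsum
      simpa using B.sub_mem (hAB hsum) h2
    have h4 : ∀ e j, der k Q e (a j) = 0 := by
      intro e
      refine ih _ (fun j => (mem_Dg_succ n (a j)).1 (ha j) e) (fun j => ?_) ?_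
      · rw [← der_mul_p, hap]
      · have := hC _ h3 e
        simpa only [Finset.smul_sum, smul_smul, p_mul_der] using this
    simp only [h4, zero_smul, Finset.sum_const_zero, smul_zero, zero_add] at h1
    have h5 := hwi r (h1 ▸ hsum)
    intro j
    rw [hr j]
    simp [h4, h5]

theorem core (A B : Submodule k L) (hAB : A ≤ B) [FiniteDimensional k B]
    (hA : ∀ v, ∀ x ∈ A, PathAlg.p k Q v • x ∈ A) (hB : ∀ v, ∀ x ∈ B, PathAlg.p k Q v • x ∈ B)
    (hAe : ∀ e, ∀ x ∈ A, PathAlg.arrow k Q e • x ∈ B)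
    (htop : Submodule.span (PathAlg k Q) (A : Set L) = ⊤)
    (hC : ∀ l : Q.A → L, ∑ e, PathAlg.arrow k Q e • l e ∈ B →
      ∀ e, PathAlg.p k Q (Q.tgt e) • l e ∈ A) :
    ∃ Q' : Submodule (PathAlg k Q) L,
        Module.Projective (PathAlg k Q) ↥Q' ∧ FiniteDimensional k (L ⧸ Q') ∧ Q'.FG := by
  obtain ⟨J, _, v, w, hw, hwB, hwi, hsp⟩ := exists_family A B hAB hA hB
  have hind := indep A B hAB hC v w hw hwB hwi
  let π : (J → PathAlg k Q) →ₗ[PathAlg k Q] L := Fintype.linearCombination (PathAlg k Q) w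
  have hπ : ∀ a, π a = ∑ j, a j • w j := fun a => Fintype.linearCombination_apply _ _ _
  let ρ : (J → PathAlg k Q) →ₗ[PathAlg k Q] (J → PathAlg k Q) :=
    { toFun := fun a j => a j * PathAlg.p k Q (v j)
      map_add' := by intro a b; funext j; simp [add_mul]
      map_smul' := by intro a b; funext j; simp [mul_assoc] }
  have hρ : ∀ a j, ρ a j = a j * PathAlg.p k Q (v j) := fun a j => rfl
  have hπρ : ∀ a, π (ρ a) = π a := by
    intro a
    rw [hπ, hπ]
    refine Finset.sum_congr rfl fun j _ => ?_
    rw [hρ, mul_smul, hw]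
  have hker : LinearMap.ker π ≤ LinearMap.ker ρ := by
    intro a ha
    rw [LinearMap.mem_ker] at ha ⊢
    choose n hn using fun j => exists_Dg (ρ a j)
    funext j
    refine hind (Finset.univ.sup n) (ρ a)
      (fun j => Dg_mono (Finset.le_sup (Finset.mem_univ j)) (hn j)) ?_ ?_ j
    · intro j
      rw [hρ, mul_assoc, PathAlg.p_mul_self]
    · rw [← hπ, hπρ, ha]; exact A.zero_mem
  have hrange : LinearMap.range π = Submodule.span (PathAlg k Q) (Set.range w) :=
    Fintype.range_linearCombination _ _
  refine ⟨LinearMap.range π, ?_, ?_, ?_⟩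
  · let s : LinearMap.range π →ₗ[PathAlg k Q] (J → PathAlg k Q) :=
      ((LinearMap.ker π).liftQ ρ hker).comp π.quotKerEquivRange.symm.toLinearMap
    refine Module.Projective.of_split s π.rangeRestrict ?_
    ext ⟨_, a, rfl⟩
    have h1 : s ⟨π a, a, rfl⟩ = ρ a := by
      change (LinearMap.ker π).liftQ ρ hker (π.quotKerEquivRange.symm ⟨π a, a, rfl⟩) = _
      have : π.quotKerEquivRange.symm ⟨π a, a, rfl⟩ = (LinearMap.ker π).mkQ a := by
        rw [LinearEquiv.symm_apply_eq]; rfl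
      rw [this]; rfl
    change π (s ⟨π a, a, rfl⟩) = π a
    rw [h1, hπρ]
  · have hfA : FiniteDimensional k A := Submodule.finiteDimensional_of_le hAB
    let q : L →ₗ[k] (L ⧸ LinearMap.range π) :=
      (Submodule.mkQ (LinearMap.range π)).restrictScalars k
    have hBT : ∀ x ∈ B, ∃ y ∈ A, x - y ∈ LinearMap.range π := by
      intro x hx
      obtain ⟨y, hy, z, hz, rfl⟩ := Submodule.mem_sup.1 (hsp hx)
      refine ⟨y, hy, ?_⟩
      rw [add_sub_cancel_left, hrange]
      exact Submodule.span_le_restrictScalars k _ _ hz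
    have hT : ∀ x : L, ∃ y ∈ A, x - y ∈ LinearMap.range π := by
      have hT' : ∀ a : PathAlg k Q, ∀ x ∈ A, ∃ y ∈ A, a • x - y ∈ LinearMap.range π := by
        intro a
        let T : Submodule k (PathAlg k Q) :=
          { carrier := {a | ∀ x ∈ A, ∃ y ∈ A, a • x - y ∈ LinearMap.range π}
            add_mem' := by
              intro a b ha hb x hx
              obtain ⟨y, hy, h1⟩ := ha x hx
              obtain ⟨z, hz, h2⟩ := hb x hx
              refine ⟨y + z, add_mem hy hz, ?_⟩
              have := add_mem h1 h2
              rwa [add_smul, add_sub_add_comm]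
            zero_mem' := by
              intro x hx
              exact ⟨0, A.zero_mem, by simp⟩
            smul_mem' := by
              intro r a ha x hx
              obtain ⟨y, hy, h1⟩ := ha x hx
              refine ⟨r • y, A.smul_mem _ hy, ?_⟩
              rw [smul_assoc, ← smul_sub]
              exact Submodule.smul_of_tower_mem _ r h1 }
        refine gen_ind T ?_ ?_ ?_ a
        · intro x hx; exact ⟨x, hx, by simp⟩
        · intro v b hb x hx
          obtain ⟨y, hy, h1⟩ := hb x hx
          refine ⟨_, hA v y hy, ?_⟩
          rw [mul_smul, ← smul_sub]
          exact Submodule.smul_mem _ _ h1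
        · intro e b hb x hx
          obtain ⟨y, hy, h1⟩ := hb x hx
          obtain ⟨z, hz, h2⟩ := hBT _ (hAe e y hy)
          refine ⟨z, hz, ?_⟩
          have := add_mem (Submodule.smul_mem _ (PathAlg.arrow k Q e) h1) h2
          rwa [smul_sub, sub_add_sub_cancel, ← mul_smul] at this
      intro x
      have hx : x ∈ Submodule.span (PathAlg k Q) (A : Set L) := by rw [htop]; trivial
      induction hx using Submodule.span_induction with
      | mem x h => exact ⟨x, h, by simp⟩
      | zero => exact ⟨0, A.zero_mem, by simp⟩
      | add x y _ _ hx hy =>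
        obtain ⟨x', hx', h1⟩ := hx
        obtain ⟨y', hy', h2⟩ := hy
        refine ⟨x' + y', add_mem hx' hy', ?_⟩
        rw [add_sub_add_comm]
        exact add_mem h1 h2
      | smul a x _ hx =>
        obtain ⟨y, hy, h1⟩ := hx
        obtain ⟨z, hz, h2⟩ := hT' a y hy
        refine ⟨z, hz, ?_⟩
        have := add_mem (Submodule.smul_mem _ a h1) h2
        rwa [smul_sub, sub_add_sub_cancel] at this
    refine Module.Finite.of_surjective (q.comp A.subtype) ?_
    intro z
    obtain ⟨x, rfl⟩ := Submodule.mkQ_surjective _ z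
    obtain ⟨y, hy, h⟩ := hT x
    refine ⟨⟨y, hy⟩, ?_⟩
    exact ((Submodule.Quotient.eq _).2 h).symm
  · rw [hrange]
    exact Submodule.fg_span (Set.finite_range w)

/-- Filtration on the free module. -/
noncomputable def Fil (k : Type) [Field k] (Q : FinQuiver) (ι : Type) (n : ℕ) :
    Submodule k (ι →₀ PathAlg k Q) :=
  ⨅ i, (Dg k Q n).comap (Finsupp.lapply i)

theorem mem_Fil {ι : Type} (n : ℕ) (x : ι →₀ PathAlg k Q) :
    x ∈ Fil k Q ι n ↔ ∀ i, x i ∈ Dg k Q n := by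
  simp [Fil, Submodule.mem_iInf]

theorem Fil_finite {ι : Type} [Finite ι] (n : ℕ) : FiniteDimensional k (Fil k Q ι n) := by
  let f : Fil k Q ι n →ₗ[k] (ι → Dg k Q n) :=
    { toFun := fun x i => ⟨x.1 i, (mem_Fil n x.1).1 x.2 i⟩
      map_add' := fun x y => rfl
      map_smul' := fun x y => rfl }
  refine Module.Finite.of_injective f ?_
  intro x y h
  ext i
  exact congrArg Subtype.val (congrFun h i)

theorem ker_decomp {ι : Type} (N : Submodule (PathAlg k Q) (ι →₀ PathAlg k Q))
    (T : Set (ι →₀ PathAlg k Q)) (hT : Submodule.span (PathAlg k Q) T = N) (m : ℕ)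
    (hm : ∀ t ∈ T, t ∈ Fil k Q ι m) (y : ι →₀ PathAlg k Q) (hy : y ∈ N) :
    ∃ c : Q.A → (ι →₀ PathAlg k Q), (∀ e, c e ∈ N) ∧
      y - ∑ e, PathAlg.arrow k Q e • c e ∈ Fil k Q ι m := by
  subst hT
  induction hy using Submodule.span_induction with
  | mem x h => exact ⟨0, fun e => zero_mem _, by simpa using hm x h⟩
  | zero => exact ⟨0, fun e => zero_mem _, by simp⟩
  | add x y _ _ hx hy =>
    obtain ⟨c, hc, h1⟩ := hx
    obtain ⟨d, hd, h2⟩ := hy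
    refine ⟨c + d, fun e => add_mem (hc e) (hd e), ?_⟩
    have := add_mem h1 h2
    simpa only [Pi.add_apply, smul_add, Finset.sum_add_distrib, add_sub_add_comm] using this
  | smul a y hyN hy =>
    obtain ⟨c, hc, h1⟩ := hy
    have hS : ∀ s ∈ Sp k Q, ∃ c : Q.A → (ι →₀ PathAlg k Q),
        (∀ e, c e ∈ Submodule.span (PathAlg k Q) T) ∧
        s • y - ∑ e, PathAlg.arrow k Q e • c e ∈ Fil k Q ι m := by
      intro s hs
      induction hs using Submodule.span_induction with
      | mem s h =>
        obtain ⟨v, rfl⟩ := h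
        refine ⟨fun e => if v = Q.src e then c e else 0, fun e => ?_, ?_⟩
        · dsimp only
          split_ifs
          · exact hc e
          · exact zero_mem _
        · have : PathAlg.p k Q v • y - ∑ e, PathAlg.arrow k Q e •
              (if v = Q.src e then c e else 0) =
              PathAlg.p k Q v • (y - ∑ e, PathAlg.arrow k Q e • c e) := by
            rw [smul_sub, Finset.smul_sum]
            congr 1
            refine Finset.sum_congr rfl fun e _ => ?_
            rw [smul_smul, p_mul_arrow]
            split_ifs <;> simp
          rw [this, mem_Fil]
          intro i
          exact Dg_p_mul _ _ _ ((mem_Fil _ _).1 h1 i)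
      | zero => exact ⟨0, fun e => zero_mem _, by simp⟩
      | add x z _ _ hx hy =>
        obtain ⟨c, hc, h1⟩ := hx
        obtain ⟨d, hd, h2⟩ := hy
        refine ⟨c + d, fun e => add_mem (hc e) (hd e), ?_⟩
        have := add_mem h1 h2
        simpa only [Pi.add_apply, smul_add, add_smul, Finset.sum_add_distrib,
          add_sub_add_comm] using this
      | smul r x _ hx =>
        obtain ⟨c, hc, h1⟩ := hx
        refine ⟨r • c, fun e => Submodule.smul_of_tower_mem _ r (hc e), ?_⟩
        have := Submodule.smul_mem _ r h1
        rw [smul_sub, Finset.smul_sum] at this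
        simpa only [Pi.smul_apply, smul_assoc, smul_comm _ r] using this
    obtain ⟨d, hd, h2⟩ := hS _ (decomp a)
    refine ⟨fun e => d e + der k Q e a • y, fun e => add_mem (hd e) (Submodule.smul_mem _ _ hyN), ?_⟩
    convert h2 using 1
    simp only [smul_add, Finset.sum_add_distrib, sub_smul, Finset.sum_smul, mul_smul]
    abel

theorem finite_case {ι : Type} [Finite ι] (g : (ι →₀ PathAlg k Q) →ₗ[PathAlg k Q] L)
    (hg : Function.Surjective g) (hker : (LinearMap.ker g).FG) :
    ∃ Q' : Submodule (PathAlg k Q) L,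
        Module.Projective (PathAlg k Q) ↥Q' ∧ FiniteDimensional k (L ⧸ Q') ∧ Q'.FG := by
  have := Fintype.ofFinite ι
  obtain ⟨T, hT⟩ := hker
  have hex : ∀ x : ι →₀ PathAlg k Q, ∃ n, x ∈ Fil k Q ι n := by
    intro x
    choose n hn using fun i => exists_Dg (x i)
    exact ⟨Finset.univ.sup n, (mem_Fil _ _).2 fun i =>
      Dg_mono (Finset.le_sup (Finset.mem_univ i)) (hn i)⟩
  choose d hd using hex
  have hmono : Monotone (Fil k Q ι) := by
    intro a b hab x hx
    rw [mem_Fil] at hx ⊢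
    exact fun i => Dg_mono hab (hx i)
  let m := T.sup d + 1
  have hm : ∀ t ∈ T, t ∈ Fil k Q ι m := fun t ht =>
    hmono ((Finset.le_sup ht).trans (Nat.le_succ _)) (hd t)
  let g' : (ι →₀ PathAlg k Q) →ₗ[k] L := g.restrictScalars k
  have hg' : ∀ x, g' x = g x := fun x => rfl
  have hfin : FiniteDimensional k (Fil k Q ι (m + 1)) := Fil_finite _
  have hpst : ∀ n v, ∀ x ∈ (Fil k Q ι n).map g', PathAlg.p k Q v • x ∈ (Fil k Q ι n).map g' := by
    rintro n v _ ⟨x, hx, rfl⟩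
    refine ⟨PathAlg.p k Q v • x, ?_, ?_⟩
    · rw [SetLike.mem_coe, mem_Fil] at hx ⊢
      exact fun i => Dg_p_mul _ _ _ (hx i)
    · rw [hg', hg', map_smul]
  refine core ((Fil k Q ι m).map g') ((Fil k Q ι (m + 1)).map g')
    (Submodule.map_mono (hmono (Nat.le_succ _))) (hpst _) (hpst _) ?_ ?_ ?_
  · rintro e _ ⟨x, hx, rfl⟩
    refine ⟨PathAlg.arrow k Q e • x, ?_, ?_⟩
    · rw [SetLike.mem_coe, mem_Fil] at hx ⊢
      exact fun i => Dg_arrow_mul _ _ _ (hx i)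
    · rw [hg', hg', map_smul]
  · rw [eq_top_iff]
    rintro x -
    obtain ⟨y, rfl⟩ := hg x
    induction y using Finsupp.induction_linear with
    | zero => simp
    | add a b ha hb => rw [map_add]; exact add_mem ha hb
    | single i a =>
      rw [← mul_one a, ← smul_eq_mul, ← Finsupp.smul_single, map_smul]
      refine Submodule.smul_mem _ _ (Submodule.subset_span ⟨_, ?_, rfl⟩)
      rw [SetLike.mem_coe, mem_Fil]
      intro j
      classical
      rw [Finsupp.single_apply]
      split_ifs
      · exact Dg_mono (Nat.le_add_left _ _) one_mem_Dg
      · exact zero_mem _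
  · rintro l ⟨z, hz, hzl⟩ e
    choose b hb using fun e => hg (l e)
    have hy : ∑ e, PathAlg.arrow k Q e • b e - z ∈ LinearMap.ker g := by
      rw [LinearMap.mem_ker, map_sub, map_sum, ← hg' z, hzl]
      simp [hb]
    obtain ⟨c, hc, h1⟩ := ker_decomp _ _ hT m hm _ hy
    have h2 : ∑ e, PathAlg.arrow k Q e • (b e - c e) ∈ Fil k Q ι (m + 1) := by
      have := add_mem (hmono (Nat.le_succ _) h1) hz
      convert this using 1
      simp only [smul_sub, Finset.sum_sub_distrib]
      abel
    refine ⟨PathAlg.p k Q (Q.tgt e) • (b e - c e), ?_, ?_⟩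
    · rw [SetLike.mem_coe, mem_Fil] at *
      intro i
      have h3 := (mem_Dg_succ _ _).1 (h2 i) e
      rw [Finsupp.finsetSum_apply, map_sum] at h3
      simp only [Finsupp.smul_apply, smul_eq_mul, der_arrow_mul] at h3
      simpa using h3
    · rw [hg', map_smul, map_sub, hb, LinearMap.mem_ker.1 (hc e), sub_zero]

theorem split_case {ι F₁ : Type} [Finite ι] [AddCommGroup F₁] [Module (PathAlg k Q) F₁]
    [Module.Projective (PathAlg k Q) F₁]
    (h : ((ι →₀ PathAlg k Q) × F₁) →ₗ[PathAlg k Q] L)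
    (hh : Function.Surjective h) (hker : (LinearMap.ker h).FG)
    (hsnd : ∀ x ∈ LinearMap.ker h, x.2 = 0) :
    ∃ Q' : Submodule (PathAlg k Q) L,
        Module.Projective (PathAlg k Q) ↥Q' ∧ FiniteDimensional k (L ⧸ Q') := by
  let h0 := h.comp (LinearMap.inl (PathAlg k Q) (ι →₀ PathAlg k Q) F₁)
  have hh0 : ∀ x, h0 x = h (x, 0) := fun x => rfl
  have hk : LinearMap.ker h0.rangeRestrict =
      (LinearMap.ker h).map (LinearMap.fst (PathAlg k Q) (ι →₀ PathAlg k Q) F₁) := by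
    rw [LinearMap.ker_rangeRestrict]
    ext x
    constructor
    · intro hx
      exact ⟨(x, 0), hx, rfl⟩
    · rintro ⟨⟨y, z⟩, hy, rfl⟩
      obtain rfl : z = 0 := hsnd _ hy
      exact hy
  obtain ⟨Q0, hproj, hfin, -⟩ := finite_case (k := k) h0.rangeRestrict
    h0.surjective_rangeRestrict (by rw [hk]; exact hker.map _)
  let ψ : (Q0 × F₁) →ₗ[PathAlg k Q] L :=
    LinearMap.coprod ((LinearMap.range h0).subtype.comp Q0.subtype)
      (h.comp (LinearMap.inr (PathAlg k Q) (ι →₀ PathAlg k Q) F₁))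
  have hψ : ∀ q f, ψ (q, f) = (q : LinearMap.range h0) + h (0, f) := fun q f => by simp [ψ]
  have hinj : Function.Injective ψ := by
    rw [← LinearMap.ker_eq_bot, LinearMap.ker_eq_bot']
    rintro ⟨q, f⟩ hq
    rw [hψ] at hq
    obtain ⟨x, hx⟩ := q.1.2
    rw [← hx, hh0, ← map_add, Prod.mk_add_mk, add_zero, zero_add] at hq
    obtain rfl : f = 0 := hsnd _ hq
    rw [← hh0, hx] at hq
    rw [Prod.mk_eq_zero]
    exact ⟨Subtype.ext (Subtype.ext hq), rfl⟩
  refine ⟨LinearMap.range ψ, ?_, ?_⟩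
  · exact Module.Projective.of_equiv (LinearEquiv.ofInjective ψ hinj)
  · have hle : Q0 ≤ (LinearMap.range ψ).comap (LinearMap.range h0).subtype := by
      intro q hq
      refine ⟨(⟨q, hq⟩, 0), ?_⟩
      rw [hψ, ← Prod.zero_eq_mk, map_zero, add_zero]
      rfl
    refine Module.Finite.of_surjective
      ((Submodule.mapQ Q0 (LinearMap.range ψ) (LinearMap.range h0).subtype hle).restrictScalars k) ?_
    intro z
    obtain ⟨x, rfl⟩ := Submodule.mkQ_surjective _ z
    obtain ⟨⟨a, f⟩, rfl⟩ := hh x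
    refine ⟨Q0.mkQ ⟨h0 a, a, rfl⟩, ?_⟩
    refine (Submodule.Quotient.eq _).2 ⟨(0, -f), ?_⟩
    rw [hψ]
    change (0 : L) + h (0, -f) = h (a, 0) - h (a, f)
    rw [← map_sub]
    simp

end Aux2

end LPA

open LPA in
/-- Let `L` be a finitely related left `P_k(E)`-module, i.e. there is an exact
sequence `0 → N → F → L → 0` with `F` free and `N` finitely generated.  Then `L` contains a
projective `P_k(E)`-submodule `Q'` such that `L/Q'` is finite-dimensional over `k`.
Moreover, if `L` is finitely presented then `Q'` can be chosen finitely generated. -/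
theorem statement_7 (k : Type) [Field k] (Q : FinQuiver) (L : Type) [AddCommGroup L]
    [Module (PathAlg k Q) L] [Module k L] [IsScalarTower k (PathAlg k Q) L]
    (hrel : ∃ (ι : Type) (g : (ι →₀ PathAlg k Q) →ₗ[PathAlg k Q] L),
      Function.Surjective g ∧ (LinearMap.ker g).FG) :
    (∃ Q' : Submodule (PathAlg k Q) L,
        Module.Projective (PathAlg k Q) ↥Q' ∧ FiniteDimensional k (L ⧸ Q')) ∧
    (Module.FinitePresentation (PathAlg k Q) L →
      ∃ Q' : Submodule (PathAlg k Q) L,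
        Module.Projective (PathAlg k Q) ↥Q' ∧ FiniteDimensional k (L ⧸ Q') ∧ Q'.FG) := by
  classical
  constructor
  · obtain ⟨ι, g, hg, T, hT⟩ := hrel
    let s : Set ι := ((T.biUnion Finsupp.support : Finset ι) : Set ι)
    have hsfin : Finite s := Finset.finite_toSet _
    let E : (ι →₀ PathAlg k Q) ≃ₗ[PathAlg k Q]
        ((s →₀ PathAlg k Q) × ((sᶜ : Set ι) →₀ PathAlg k Q)) :=
      (Finsupp.domLCongr (Equiv.Set.sumCompl s).symm).trans
        (Finsupp.sumFinsuppLEquivProdFinsupp (PathAlg k Q))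
    have hE : ∀ x j, (E x).2 j = x j.1 := by
      intro x j
      simp [E]
    have hkE : LinearMap.ker (g.comp E.symm.toLinearMap) =
        (LinearMap.ker g).map E.toLinearMap := by
      ext x
      constructor
      · intro hx
        exact ⟨E.symm x, hx, E.apply_symm_apply x⟩
      · rintro ⟨y, hy, rfl⟩
        change g (E.symm (E y)) = 0
        rw [E.symm_apply_apply]
        exact hy
    refine split_case (g.comp E.symm.toLinearMap) (hg.comp E.symm.surjective) ?_ ?_
    · rw [hkE]
      exact Submodule.FG.map _ ⟨T, hT⟩
    · rw [hkE]
      rintro _ ⟨y, hy, rfl⟩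
      change (E y).2 = 0
      rw [← hT] at hy
      induction hy using Submodule.span_induction with
      | mem x h =>
        ext j
        rw [hE, Finsupp.zero_apply]
        by_contra hne
        exact j.2 (Finset.mem_coe.2 (Finset.mem_biUnion.2 ⟨x, h, Finsupp.mem_support_iff.2 hne⟩))
      | zero => simp
      | add x y _ _ hx hy => rw [map_add, Prod.snd_add, hx, hy, add_zero]
      | smul a x _ hx => rw [map_smul, Prod.smul_snd, hx, smul_zero]
  · intro hfp
    obtain ⟨n, K, e, hK⟩ := Module.FinitePresentation.exists_fin (PathAlg k Q) L
    let E := Finsupp.linearEquivFunOnFinite (PathAlg k Q) (PathAlg k Q) (Fin n)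
    let g : (Fin n →₀ PathAlg k Q) →ₗ[PathAlg k Q] L :=
      e.symm.toLinearMap.comp (K.mkQ.comp E.toLinearMap)
    refine finite_case g (e.symm.surjective.comp (K.mkQ_surjective.comp E.surjective)) ?_
    have : LinearMap.ker g = K.map E.symm.toLinearMap := by
      ext x
      constructor
      · intro hx
        refine ⟨E x, ?_, E.symm_apply_apply x⟩
        have h1 : e.symm (K.mkQ (E x)) = 0 := hx
        rw [LinearEquiv.map_eq_zero_iff] at h1
        exact (Submodule.Quotient.mk_eq_zero K).1 h1
      · rintro ⟨y, hy, rfl⟩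
        change e.symm (K.mkQ (E (E.symm y))) = 0
        rw [E.apply_symm_apply, LinearEquiv.map_eq_zero_iff]
        exact (Submodule.Quotient.mk_eq_zero K).2 hy
    rw [this]
    exact hK.map _
end

section
/- The Leavitt path algebra L_k(E) is flat as a right P_k(Ē)-module, where Ē is the inverse quiver of E and P_k(Ē) is regarded as a subalgebra of L_k(E) via the embedding sending p_i to p_i and each reversed arrow ē to the generator ē of L_k(E). -/
namespace LPA

/-- Generators of the Leavitt path algebra: vertex idempotents, arrows, and ghost arrows. -/
inductive LGen (Q : FinQuiver) : Type
  | vertex (v : Q.V) : LGen Q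
  | edge (e : Q.A) : LGen Q
  | ghost (e : Q.A) : LGen Q

/-- Defining relations of the Leavitt path algebra `L_k(E)`: (V), (E1), (E2), (CK1), (CK2),
together with `∑ p_v = 1`. -/
inductive LeavittRel (k : Type) [CommRing k] (Q : FinQuiver) :
    FreeAlgebra k (LGen Q) → FreeAlgebra k (LGen Q) → Prop
  | vertex_mul_self (v : Q.V) :
      LeavittRel k Q (FreeAlgebra.ι k (LGen.vertex v) * FreeAlgebra.ι k (LGen.vertex v))
        (FreeAlgebra.ι k (LGen.vertex v))
  | vertex_mul_ne (v w : Q.V) (h : v ≠ w) :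
      LeavittRel k Q (FreeAlgebra.ι k (LGen.vertex v) * FreeAlgebra.ι k (LGen.vertex w)) 0
  | sum_vertex :
      LeavittRel k Q (∑ v : Q.V, FreeAlgebra.ι k (LGen.vertex v)) 1
  | src_mul (e : Q.A) :
      LeavittRel k Q (FreeAlgebra.ι k (LGen.vertex (Q.src e)) * FreeAlgebra.ι k (LGen.edge e))
        (FreeAlgebra.ι k (LGen.edge e))
  | mul_tgt (e : Q.A) :
      LeavittRel k Q (FreeAlgebra.ι k (LGen.edge e) * FreeAlgebra.ι k (LGen.vertex (Q.tgt e)))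
        (FreeAlgebra.ι k (LGen.edge e))
  | tgt_mul_ghost (e : Q.A) :
      LeavittRel k Q (FreeAlgebra.ι k (LGen.vertex (Q.tgt e)) * FreeAlgebra.ι k (LGen.ghost e))
        (FreeAlgebra.ι k (LGen.ghost e))
  | ghost_mul_src (e : Q.A) :
      LeavittRel k Q (FreeAlgebra.ι k (LGen.ghost e) * FreeAlgebra.ι k (LGen.vertex (Q.src e)))
        (FreeAlgebra.ι k (LGen.ghost e))
  | ghost_mul_edge_self (e : Q.A) :
      LeavittRel k Q (FreeAlgebra.ι k (LGen.ghost e) * FreeAlgebra.ι k (LGen.edge e))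
        (FreeAlgebra.ι k (LGen.vertex (Q.tgt e)))
  | ghost_mul_edge_ne (e f : Q.A) (h : e ≠ f) :
      LeavittRel k Q (FreeAlgebra.ι k (LGen.ghost e) * FreeAlgebra.ι k (LGen.edge f)) 0
  | cuntz_krieger (v : Q.V) (h : ∃ e : Q.A, Q.src e = v) :
      LeavittRel k Q
        (∑ e ∈ Finset.univ.filter (fun e : Q.A => Q.src e = v),
          FreeAlgebra.ι k (LGen.edge e) * FreeAlgebra.ι k (LGen.ghost e))
        (FreeAlgebra.ι k (LGen.vertex v))

/-- The Leavitt path algebra `L_k(E)`. -/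
def Leavitt (k : Type) [CommRing k] (Q : FinQuiver) : Type :=
  RingQuot (LeavittRel k Q)

variable (k : Type) [CommRing k] (Q : FinQuiver)

noncomputable instance : Ring (Leavitt k Q) :=
  inferInstanceAs (Ring (RingQuot (LeavittRel k Q)))

noncomputable instance : Algebra k (Leavitt k Q) :=
  inferInstanceAs (Algebra k (RingQuot (LeavittRel k Q)))

/-- The quotient map from the free algebra onto the Leavitt path algebra. -/
noncomputable def Leavitt.mk : FreeAlgebra k (LGen Q) →ₐ[k] Leavitt k Q :=
  RingQuot.mkAlgHom k (LeavittRel k Q)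

/-- The vertex idempotent `p v` in the Leavitt path algebra. -/
noncomputable def Leavitt.p (v : Q.V) : Leavitt k Q :=
  Leavitt.mk k Q (FreeAlgebra.ι k (LGen.vertex v))

/-- The arrow `e` in the Leavitt path algebra. -/
noncomputable def Leavitt.ed (e : Q.A) : Leavitt k Q :=
  Leavitt.mk k Q (FreeAlgebra.ι k (LGen.edge e))

/-- The ghost arrow `ē` in the Leavitt path algebra. -/
noncomputable def Leavitt.gh (e : Q.A) : Leavitt k Q :=
  Leavitt.mk k Q (FreeAlgebra.ι k (LGen.ghost e))

theorem Leavitt.mk_rel {x y : FreeAlgebra k (LGen Q)} (h : LeavittRel k Q x y) :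
    Leavitt.mk k Q x = Leavitt.mk k Q y :=
  RingQuot.mkAlgHom_rel k h

theorem Leavitt.p_mul_self (v : Q.V) : Leavitt.p k Q v * Leavitt.p k Q v = Leavitt.p k Q v := by
  have h := Leavitt.mk_rel k Q (LeavittRel.vertex_mul_self v)
  simpa [map_mul, Leavitt.p] using h

theorem Leavitt.p_mul_ne (v w : Q.V) (hvw : v ≠ w) :
    Leavitt.p k Q v * Leavitt.p k Q w = 0 := by
  have h := Leavitt.mk_rel k Q (LeavittRel.vertex_mul_ne v w hvw)
  simpa [map_mul, Leavitt.p] using h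

theorem Leavitt.sum_p : (∑ v : Q.V, Leavitt.p k Q v) = 1 := by
  have h := Leavitt.mk_rel k Q (LeavittRel.sum_vertex)
  simpa [map_sum, Leavitt.p] using h

theorem Leavitt.tgt_mul_gh (e : Q.A) :
    Leavitt.p k Q (Q.tgt e) * Leavitt.gh k Q e = Leavitt.gh k Q e := by
  have h := Leavitt.mk_rel k Q (LeavittRel.tgt_mul_ghost e)
  simpa [map_mul, Leavitt.p, Leavitt.gh] using h

theorem Leavitt.gh_mul_src (e : Q.A) :
    Leavitt.gh k Q e * Leavitt.p k Q (Q.src e) = Leavitt.gh k Q e := by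
  have h := Leavitt.mk_rel k Q (LeavittRel.ghost_mul_src e)
  simpa [map_mul, Leavitt.p, Leavitt.gh] using h

/-- The canonical embedding `P_k(Ē) → L_k(E)` of the path algebra of the inverse quiver into
the Leavitt path algebra, sending `p v ↦ p v` and each reversed arrow `ē ↦ ē`. -/
noncomputable def revToLeavitt : PathAlg k Q.rev →ₐ[k] Leavitt k Q :=
  RingQuot.liftAlgHom k ⟨((FreeAlgebra.lift k fun g =>
    match g with
    | PathGen.vertex v => Leavitt.p k Q v
    | PathGen.edge e => Leavitt.gh k Q e : FreeAlgebra k (PathGen Q.rev) →ₐ[k] Leavitt k Q)), by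
      intro x y h
      induction h with
      | vertex_mul_self v =>
          simp only [map_mul, FreeAlgebra.lift_ι_apply]
          exact Leavitt.p_mul_self k Q v
      | vertex_mul_ne v w h =>
          simp only [map_mul, map_zero, FreeAlgebra.lift_ι_apply]
          exact Leavitt.p_mul_ne k Q v w h
      | sum_vertex =>
          simp only [map_sum, map_one, FreeAlgebra.lift_ι_apply]
          exact Leavitt.sum_p k Q
      | src_mul e =>
          simp only [map_mul, FreeAlgebra.lift_ι_apply]
          exact Leavitt.tgt_mul_gh k Q e
      | mul_tgt e =>
          simp only [map_mul, FreeAlgebra.lift_ι_apply]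
          exact Leavitt.gh_mul_src k Q e⟩

/-- The canonical embedding `P_k(E) → L_k(E)` of the path algebra into the Leavitt path
algebra, sending `p v ↦ p v` and each arrow `e ↦ e`. -/
noncomputable def pathToLeavitt : PathAlg k Q →ₐ[k] Leavitt k Q :=
  RingQuot.liftAlgHom k ⟨((FreeAlgebra.lift k fun g =>
    match g with
    | PathGen.vertex v => Leavitt.p k Q v
    | PathGen.edge e => Leavitt.ed k Q e : FreeAlgebra k (PathGen Q) →ₐ[k] Leavitt k Q)), by
      intro x y h
      induction h with
      | vertex_mul_self v =>
          simp only [map_mul, FreeAlgebra.lift_ι_apply]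
          exact Leavitt.p_mul_self k Q v
      | vertex_mul_ne v w h =>
          simp only [map_mul, map_zero, FreeAlgebra.lift_ι_apply]
          exact Leavitt.p_mul_ne k Q v w h
      | sum_vertex =>
          simp only [map_sum, map_one, FreeAlgebra.lift_ι_apply]
          exact Leavitt.sum_p k Q
      | src_mul e =>
          simp only [map_mul, FreeAlgebra.lift_ι_apply]
          have h := Leavitt.mk_rel k Q (LeavittRel.src_mul e)
          simpa [map_mul, Leavitt.p, Leavitt.ed] using h
      | mul_tgt e =>
          simp only [map_mul, FreeAlgebra.lift_ι_apply]
          have h := Leavitt.mk_rel k Q (LeavittRel.mul_tgt e)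
          simpa [map_mul, Leavitt.p, Leavitt.ed] using h⟩

end LPA

namespace LPA

open TensorProduct

variable (P L : Type) [Ring P] [Ring L] (φ : P →+* L)

/-- The subgroup of relations defining the balanced tensor product `L ⊗_P M` (where `L` is a
right `P`-module via `φ` and `M` a left `P`-module) as a quotient of `L ⊗_ℤ M`. -/
noncomputable def trel (M : Type) [AddCommGroup M] [Module P M] :
    Submodule L (TensorProduct ℤ L M) :=
  Submodule.span L
    {z | ∃ (l : L) (p : P) (m : M), z = (l * φ p) ⊗ₜ[ℤ] m - l ⊗ₜ[ℤ] (p • m)}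

/-- The balanced tensor product `L ⊗_P M`, a left `L`-module. -/
abbrev TensorPhi (M : Type) [AddCommGroup M] [Module P M] : Type :=
  TensorProduct ℤ L M ⧸ trel P L φ M

/-- Functoriality of `L ⊗_P -` : the map induced on balanced tensor products by a `P`-linear
map `f : M → N`. -/
noncomputable def tmap {M N : Type} [AddCommGroup M] [Module P M] [AddCommGroup N]
    [Module P N] (f : M →ₗ[P] N) : TensorPhi P L φ M →ₗ[L] TensorPhi P L φ N :=
  Submodule.mapQ _ _
    (TensorProduct.AlgebraTensorModule.map (LinearMap.id : L →ₗ[L] L)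
      f.toAddMonoidHom.toIntLinearMap)
    (by
      refine Submodule.span_le.mpr ?_
      rintro z ⟨l, p, m, rfl⟩
      simp only [SetLike.mem_coe, Submodule.mem_comap, map_sub,
        TensorProduct.AlgebraTensorModule.map_tmul, LinearMap.id_coe, id_eq,
        AddMonoidHom.coe_toIntLinearMap, LinearMap.toAddMonoidHom_coe]
      exact Submodule.subset_span ⟨l, p, f m, by rw [f.map_smul]⟩)

/-- `L` is flat as a right `P`-module (via `φ : P → L`): the functor `L ⊗_P -` preserves
injectivity. -/
def RightFlat : Prop :=
  ∀ (M N : Type) [AddCommGroup M] [Module P M] [AddCommGroup N] [Module P N],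
    ∀ f : M →ₗ[P] N, Function.Injective f → Function.Injective (tmap P L φ f)

end LPA

namespace LPA

section aux

variable (k : Type) [Field k] (Q : FinQuiver)

theorem Leavitt.src_mul_ed (e : Q.A) :
    Leavitt.p k Q (Q.src e) * Leavitt.ed k Q e = Leavitt.ed k Q e := by
  have h := Leavitt.mk_rel k Q (LeavittRel.src_mul e)
  simpa [map_mul, Leavitt.p, Leavitt.ed] using h

theorem Leavitt.gh_mul_ed_self (e : Q.A) :
    Leavitt.gh k Q e * Leavitt.ed k Q e = Leavitt.p k Q (Q.tgt e) := by
  have h := Leavitt.mk_rel k Q (LeavittRel.ghost_mul_edge_self e)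
  simpa [map_mul, Leavitt.p, Leavitt.ed, Leavitt.gh] using h

theorem Leavitt.gh_mul_ed_ne (e f : Q.A) (hh : e ≠ f) :
    Leavitt.gh k Q e * Leavitt.ed k Q f = 0 := by
  have h := Leavitt.mk_rel k Q (LeavittRel.ghost_mul_edge_ne e f hh)
  simpa [map_mul, Leavitt.ed, Leavitt.gh] using h

theorem Leavitt.ck (v : Q.V) (hv : ∃ e : Q.A, Q.src e = v) :
    ∑ e ∈ Finset.univ.filter (fun e : Q.A => Q.src e = v),
      Leavitt.ed k Q e * Leavitt.gh k Q e = Leavitt.p k Q v := by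
  have h := Leavitt.mk_rel k Q (LeavittRel.cuntz_krieger v hv)
  simpa [map_mul, map_sum, Leavitt.p, Leavitt.ed, Leavitt.gh] using h

theorem rev_p (v : Q.V) :
    revToLeavitt k Q (PathAlg.p k Q.rev v) = Leavitt.p k Q v := by
  unfold revToLeavitt PathAlg.p PathAlg.mk
  erw [RingQuot.liftAlgHom_mkAlgHom_apply]
  rw [FreeAlgebra.lift_ι_apply]

theorem rev_arrow (e : Q.A) :
    revToLeavitt k Q (PathAlg.arrow k Q.rev e) = Leavitt.gh k Q e := by
  unfold revToLeavitt PathAlg.arrow PathAlg.mk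
  erw [RingQuot.liftAlgHom_mkAlgHom_apply]
  rw [FreeAlgebra.lift_ι_apply]

/-- Boundary paths of level `m`: valid paths from `v` which have length at least `m` or end in
a sink. -/
def Bd : ℕ → Q.V → List Q.A → Prop
  | m, v, [] => m = 0 ∨ ∀ e, Q.src e ≠ v
  | m, v, e :: l => Q.src e = v ∧ Bd (m - 1) (Q.tgt e) l

variable {Q} in
theorem Bd.anti {l : List Q.A} : ∀ {m n : ℕ} {v : Q.V}, m ≤ n → Bd Q n v l → Bd Q m v l := by
  induction l with
  | nil =>
    rintro m n v h (h' | h')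
    · left; omega
    · right; exact h'
  | cons e l ih =>
    rintro m n v h ⟨h1, h2⟩
    exact ⟨h1, ih (by omega) h2⟩

/-- Ghost path in `L`. -/
noncomputable def gpath : Q.V → List Q.A → Leavitt k Q
  | v, [] => Leavitt.p k Q v
  | _, e :: l => gpath (Q.tgt e) l * Leavitt.gh k Q e

/-- Ghost path in `P`. -/
noncomputable def ppath : Q.V → List Q.A → PathAlg k Q.rev
  | v, [] => PathAlg.p k Q.rev v
  | _, e :: l => ppath (Q.tgt e) l * PathAlg.arrow k Q.rev e

theorem rev_ppath (l : List Q.A) : ∀ v, revToLeavitt k Q (ppath k Q v l) = gpath k Q v l := by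
  induction l with
  | nil => intro v; exact rev_p k Q v
  | cons e l ih =>
    intro v
    simp only [ppath, gpath, map_mul, ih, rev_arrow]

theorem gpath_mul_p {m : ℕ} {v : Q.V} {l : List Q.A} (h : Bd Q m v l) :
    gpath k Q v l * Leavitt.p k Q v = gpath k Q v l := by
  cases l with
  | nil => exact Leavitt.p_mul_self k Q v
  | cons e l =>
    obtain ⟨rfl, -⟩ := h
    simp only [gpath, mul_assoc, Leavitt.gh_mul_src]

theorem gpath_mul_p_ne {m : ℕ} {v w : Q.V} {l : List Q.A} (h : Bd Q m v l) (hw : v ≠ w) :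
    gpath k Q v l * Leavitt.p k Q w = 0 := by
  rw [← gpath_mul_p k Q h, mul_assoc, Leavitt.p_mul_ne k Q v w hw, mul_zero]

theorem gpath_mul_gh_ne {m : ℕ} {v : Q.V} {e : Q.A} {l : List Q.A} (h : Bd Q m v l)
    (hw : v ≠ Q.tgt e) : gpath k Q v l * Leavitt.gh k Q e = 0 := by
  rw [← Leavitt.tgt_mul_gh, ← mul_assoc, gpath_mul_p_ne k Q h hw, zero_mul]

theorem vanish {X : Type} [AddCommGroup X] [Module (Leavitt k Q) X] (m : ℕ) : ∀ (x : X),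
    (∀ v l, Bd Q m v l → gpath k Q v l • x = 0) → x = 0 := by
  have key : ∀ x : X, (∀ v, Leavitt.p k Q v • x = 0) → x = 0 := by
    intro x h
    rw [← one_smul (Leavitt k Q) x, ← Leavitt.sum_p, Finset.sum_smul]
    exact Finset.sum_eq_zero fun v _ => h v
  induction m with
  | zero => exact fun x h => key x fun v => h v [] (Or.inl rfl)
  | succ m ih =>
    intro x h
    have hg : ∀ e, Leavitt.gh k Q e • x = 0 := by
      intro e
      apply ih
      intro v l hl
      rw [← mul_smul]
      by_cases hv : v = Q.tgt e
      · subst hv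
        exact h (Q.src e) (e :: l) ⟨rfl, hl⟩
      · rw [gpath_mul_gh_ne k Q hl hv, zero_smul]
    apply key
    intro v
    by_cases hv : ∃ e, Q.src e = v
    · rw [← Leavitt.ck k Q v hv, Finset.sum_smul]
      exact Finset.sum_eq_zero fun e _ => by rw [mul_smul, hg, smul_zero]
    · exact h v [] (Or.inr (by simpa using hv))

theorem Leavitt.mk_surj (l : Leavitt k Q) : ∃ a, Leavitt.mk k Q a = l :=
  RingQuot.mkAlgHom_surjective k _ l

theorem PathAlg.mk_surj (R : FinQuiver) (l : PathAlg k R) : ∃ a, PathAlg.mk k R a = l :=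
  RingQuot.mkAlgHom_surjective k _ l

theorem absorb {X : Type} [AddCommGroup X] [Module (Leavitt k Q) X] (J : AddSubgroup X)
    (hJ : ∀ (c : PathAlg k Q.rev), ∀ x ∈ J, revToLeavitt k Q c • x ∈ J) (l : Leavitt k Q) :
    ∀ x : X, (∃ m, ∀ v γ, Bd Q m v γ → gpath k Q v γ • x ∈ J) →
      ∃ m, ∀ v γ, Bd Q m v γ → gpath k Q v γ • (l • x) ∈ J := by
  obtain ⟨a, rfl⟩ := Leavitt.mk_surj k Q l
  induction a using FreeAlgebra.induction with
  | grade0 r =>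
    rintro x ⟨m, h⟩
    refine ⟨m, fun v γ hγ => ?_⟩
    rw [AlgHom.commutes, ← mul_smul, ← Algebra.commutes, mul_smul,
      ← (revToLeavitt k Q).commutes]
    exact hJ _ _ (h v γ hγ)
  | grade1 g =>
    rintro x ⟨m, h⟩
    cases g with
    | vertex u =>
      refine ⟨m, fun v γ hγ => ?_⟩
      change gpath k Q v γ • (Leavitt.p k Q u • x) ∈ J
      rw [← mul_smul]
      by_cases hv : v = u
      · subst hv
        rw [gpath_mul_p k Q hγ]; exact h v γ hγ
      · rw [gpath_mul_p_ne k Q hγ hv, zero_smul]; exact J.zero_mem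
    | edge e =>
      refine ⟨m + 1, fun v γ hγ => ?_⟩
      change gpath k Q v γ • (Leavitt.ed k Q e • x) ∈ J
      rw [← mul_smul]
      cases γ with
      | nil =>
        have hv : v ≠ Q.src e := by
          rcases hγ with hγ | hγ
          · omega
          · exact (hγ e).symm
        rw [← Leavitt.src_mul_ed, ← mul_assoc]
        simp only [gpath]
        rw [Leavitt.p_mul_ne k Q _ _ hv, zero_mul, zero_smul]
        exact J.zero_mem
      | cons f γ =>
        obtain ⟨rfl, h2⟩ := hγ
        simp only [gpath]
        rw [mul_assoc]
        by_cases hf : f = e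
        · subst hf
          rw [Leavitt.gh_mul_ed_self, gpath_mul_p k Q h2]
          exact h _ _ h2
        · rw [Leavitt.gh_mul_ed_ne k Q _ _ hf, mul_zero, zero_smul]
          exact J.zero_mem
    | ghost e =>
      refine ⟨m, fun v γ hγ => ?_⟩
      change gpath k Q v γ • (Leavitt.gh k Q e • x) ∈ J
      rw [← mul_smul]
      by_cases hv : v = Q.tgt e
      · subst hv
        exact h (Q.src e) (e :: γ) ⟨rfl, hγ.anti (by omega)⟩
      · rw [gpath_mul_gh_ne k Q hγ hv, zero_smul]; exact J.zero_mem
  | mul a b ha hb =>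
    intro x hx
    obtain ⟨m, h⟩ := ha _ (hb x hx)
    exact ⟨m, fun v γ hγ => by rw [map_mul, mul_smul]; exact h v γ hγ⟩
  | add a b ha hb =>
    intro x hx
    obtain ⟨m, h⟩ := ha x hx
    obtain ⟨n, h'⟩ := hb x hx
    refine ⟨max m n, fun v γ hγ => ?_⟩
    rw [map_add, add_smul, smul_add]
    exact J.add_mem (h v γ (hγ.anti (le_max_left _ _))) (h' v γ (hγ.anti (le_max_right _ _)))

/-! ### The module of germs -/

section germs

variable (N : Type) [AddCommGroup N] [Module k N]

/-- Small functions. -/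
def small : Submodule k (Q.V → List Q.A → N) where
  carrier := {ξ | ∃ m, ∀ v γ, Bd Q m v γ → ξ v γ = 0}
  zero_mem' := ⟨0, fun _ _ _ => rfl⟩
  add_mem' := by
    rintro a b ⟨m, h⟩ ⟨n, h'⟩
    refine ⟨max m n, fun v γ hγ => ?_⟩
    simp [h v γ (hγ.anti (le_max_left _ _)), h' v γ (hγ.anti (le_max_right _ _))]
  smul_mem' := by
    rintro c a ⟨m, h⟩
    exact ⟨m, fun v γ hγ => by simp [h v γ hγ]⟩

/-- Vertex operator. -/
def opP (u : Q.V) : (Q.V → List Q.A → N) →ₗ[k] (Q.V → List Q.A → N) where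
  toFun ξ := fun v γ => if v = u then ξ v γ else 0
  map_add' ξ η := by ext v γ; by_cases h : v = u <;> simp [h]
  map_smul' c ξ := by ext v γ; by_cases h : v = u <;> simp [h]

/-- Ghost operator. -/
def opG (e : Q.A) : (Q.V → List Q.A → N) →ₗ[k] (Q.V → List Q.A → N) where
  toFun ξ := fun v γ => if v = Q.tgt e then ξ (Q.src e) (e :: γ) else 0
  map_add' ξ η := by ext v γ; by_cases h : v = Q.tgt e <;> simp [h]
  map_smul' c ξ := by ext v γ; by_cases h : v = Q.tgt e <;> simp [h]

/-- Edge operator. -/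
def opE (e : Q.A) : (Q.V → List Q.A → N) →ₗ[k] (Q.V → List Q.A → N) where
  toFun ξ := fun v γ => match γ with
    | [] => 0
    | f :: γ => if f = e ∧ v = Q.src e then ξ (Q.tgt e) γ else 0
  map_add' ξ η := by
    ext v γ
    cases γ with
    | nil => simp
    | cons f γ => by_cases h : f = e ∧ v = Q.src e <;> simp [h]
  map_smul' c ξ := by
    ext v γ
    cases γ with
    | nil => simp
    | cons f γ => by_cases h : f = e ∧ v = Q.src e <;> simp [h]

theorem opP_small (u : Q.V) : small k Q N ≤ (small k Q N).comap (opP k Q N u) := by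
  rintro ξ ⟨m, h⟩
  exact ⟨m, fun v γ hγ => by simp [opP, h v γ hγ]⟩

theorem opG_small (e : Q.A) : small k Q N ≤ (small k Q N).comap (opG k Q N e) := by
  rintro ξ ⟨m, h⟩
  refine ⟨m, fun v γ hγ => ?_⟩
  simp only [opG, LinearMap.coe_mk, AddHom.coe_mk]
  split_ifs with hv
  · subst hv
    exact h _ _ ⟨rfl, hγ.anti (by omega)⟩
  · rfl

theorem opE_small (e : Q.A) : small k Q N ≤ (small k Q N).comap (opE k Q N e) := by
  rintro ξ ⟨m, h⟩
  refine ⟨m + 1, fun v γ hγ => ?_⟩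
  simp only [opE, LinearMap.coe_mk, AddHom.coe_mk]
  cases γ with
  | nil => rfl
  | cons f γ =>
    simp only
    split_ifs with hv
    · obtain ⟨rfl, rfl⟩ := hv
      exact h _ _ hγ.2
    · rfl

/-- Germs of functions. -/
abbrev Germs : Type := (Q.V → List Q.A → N) ⧸ small k Q N

/-- Generators act on germs. -/
def opGen : LGen Q → Module.End k (Germs k Q N)
  | LGen.vertex u => Submodule.mapQ _ _ (opP k Q N u) (opP_small k Q N u)
  | LGen.edge e => Submodule.mapQ _ _ (opE k Q N e) (opE_small k Q N e)
  | LGen.ghost e => Submodule.mapQ _ _ (opG k Q N e) (opG_small k Q N e)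

/-- The Leavitt path algebra acts on germs. -/
noncomputable def rho : Leavitt k Q →ₐ[k] Module.End k (Germs k Q N) :=
  RingQuot.liftAlgHom k ⟨FreeAlgebra.lift k (opGen k Q N), by
    intro x y h
    induction h with
    | vertex_mul_self v =>
      simp only [map_mul, FreeAlgebra.lift_ι_apply, opGen]
      refine LinearMap.ext fun x => ?_
      obtain ⟨ξ, rfl⟩ := Submodule.Quotient.mk_surjective _ x
      refine congrArg (small k Q N).mkQ ?_
      ext v γ
      simp +contextual [opP]
    | vertex_mul_ne v w h =>
      simp only [map_mul, map_zero, FreeAlgebra.lift_ι_apply, opGen]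
      refine LinearMap.ext fun x => ?_
      obtain ⟨ξ, rfl⟩ := Submodule.Quotient.mk_surjective _ x
      refine congrArg (small k Q N).mkQ (a₂ := 0) ?_
      ext u γ
      simp only [opP, LinearMap.coe_mk, AddHom.coe_mk]
      split_ifs with h1 h2
      · exact absurd (h1.symm.trans h2) h
      · rfl
      · rfl
    | sum_vertex =>
      simp only [map_sum, map_one, FreeAlgebra.lift_ι_apply, opGen]
      refine LinearMap.ext fun x => ?_
      obtain ⟨ξ, rfl⟩ := Submodule.Quotient.mk_surjective _ x
      simp only [LinearMap.sum_apply,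
        Submodule.mapQ_apply, Module.End.one_apply]
      simp only [← Submodule.mkQ_apply, ← map_sum]
      congr 1
      ext u γ
      simp [opP, Finset.sum_apply]
    | src_mul e =>
      simp only [map_mul, FreeAlgebra.lift_ι_apply, opGen]
      refine LinearMap.ext fun x => ?_
      obtain ⟨ξ, rfl⟩ := Submodule.Quotient.mk_surjective _ x
      refine congrArg (small k Q N).mkQ ?_
      ext v γ
      cases γ <;> simp +contextual [opP, opE]
      grind
    | mul_tgt e =>
      simp only [map_mul, FreeAlgebra.lift_ι_apply, opGen]
      refine LinearMap.ext fun x => ?_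
      obtain ⟨ξ, rfl⟩ := Submodule.Quotient.mk_surjective _ x
      refine congrArg (small k Q N).mkQ ?_
      ext v γ
      cases γ <;> simp [opP, opE]
    | tgt_mul_ghost e =>
      simp only [map_mul, FreeAlgebra.lift_ι_apply, opGen]
      refine LinearMap.ext fun x => ?_
      obtain ⟨ξ, rfl⟩ := Submodule.Quotient.mk_surjective _ x
      refine congrArg (small k Q N).mkQ ?_
      ext v γ
      simp +contextual [opP, opG]
    | ghost_mul_src e =>
      simp only [map_mul, FreeAlgebra.lift_ι_apply, opGen]
      refine LinearMap.ext fun x => ?_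
      obtain ⟨ξ, rfl⟩ := Submodule.Quotient.mk_surjective _ x
      refine congrArg (small k Q N).mkQ ?_
      ext v γ
      simp [opP, opG]
    | ghost_mul_edge_self e =>
      simp only [map_mul, FreeAlgebra.lift_ι_apply, opGen]
      refine LinearMap.ext fun x => ?_
      obtain ⟨ξ, rfl⟩ := Submodule.Quotient.mk_surjective _ x
      refine congrArg (small k Q N).mkQ ?_
      ext v γ
      simp only [opP, opG, opE, LinearMap.coe_mk, AddHom.coe_mk]
      by_cases hv : v = Q.tgt e
      · subst hv; simp
      · simp [hv]
    | ghost_mul_edge_ne e f h =>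
      simp only [map_mul, map_zero, FreeAlgebra.lift_ι_apply, opGen]
      refine LinearMap.ext fun x => ?_
      obtain ⟨ξ, rfl⟩ := Submodule.Quotient.mk_surjective _ x
      refine congrArg (small k Q N).mkQ (a₂ := 0) ?_
      ext v γ
      simp [opG, opE, h]
    | cuntz_krieger v h =>
      simp only [map_sum, map_mul, FreeAlgebra.lift_ι_apply, opGen]
      refine LinearMap.ext fun x => ?_
      obtain ⟨ξ, rfl⟩ := Submodule.Quotient.mk_surjective _ x
      simp only [LinearMap.sum_apply,
        Submodule.mapQ_apply, Module.End.mul_apply]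
      simp only [← Submodule.mkQ_apply, ← map_sum]
      simp only [Submodule.mkQ_apply]
      rw [Submodule.Quotient.eq]
      refine ⟨1, fun u γ hγ => ?_⟩
      simp only [Pi.sub_apply, Finset.sum_apply]
      cases γ with
      | nil =>
        have hu : u ≠ v := by
          rintro rfl
          obtain ⟨e, he⟩ := h
          rcases hγ with hγ | hγ
          · omega
          · exact hγ e he
        simp [opE, opP, hu]
      | cons f γ =>
        obtain ⟨rfl, -⟩ := hγ
        simp only [opE, opG, opP, LinearMap.coe_mk, AddHom.coe_mk]
        rw [sub_eq_zero]
        by_cases hf : Q.src f = v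
        · rw [Finset.sum_eq_single f]
          · simp [hf]
          · intro b _ hb
            simp [hb.symm]
          · simp [hf]
        · rw [if_neg hf]
          refine Finset.sum_eq_zero fun e he => if_neg ?_
          rintro ⟨rfl, -⟩
          simp at he
          exact hf he⟩

theorem rho_mk (g : LGen Q) : rho k Q N (Leavitt.mk k Q (FreeAlgebra.ι k g)) = opGen k Q N g := by
  unfold rho Leavitt.mk
  erw [RingQuot.liftAlgHom_mkAlgHom_apply]
  rw [FreeAlgebra.lift_ι_apply]

end germs

open TensorProduct

theorem tensor_zero {P L X N : Type} [Ring P] [Ring L] (φ : P →+* L) [AddCommGroup X] [Module L X]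
    [AddCommGroup N] [Module P N] (h : N →+ X) (hh : ∀ (p : P) n, h (p • n) = φ p • h n) (n : N)
    (hn : (1 : L) ⊗ₜ[ℤ] n ∈ trel P L φ N) : h n = 0 := by
  let F : TensorProduct ℤ L N →ₗ[L] X := TensorProduct.AlgebraTensorModule.lift
    { toFun := fun l => l • h.toIntLinearMap
      map_add' := fun a b => add_smul a b _
      map_smul' := fun a b => mul_smul a b _ }
  have hF : ∀ l n, F (l ⊗ₜ n) = l • h n := fun l n => rfl
  have : trel P L φ N ≤ LinearMap.ker F := by
    refine Submodule.span_le.mpr ?_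
    rintro z ⟨l, p, m, rfl⟩
    simp [hF, hh, mul_smul]
  have := this hn
  simpa [hF] using this

/-- The torsion criterion. -/
theorem torsion (N : Type) [AddCommGroup N] [Module (PathAlg k Q.rev) N] (n : N)
    (hn : (1 : Leavitt k Q) ⊗ₜ[ℤ] n ∈
      trel (PathAlg k Q.rev) (Leavitt k Q) (revToLeavitt k Q).toRingHom N) :
    ∃ m, ∀ v γ, Bd Q m v γ → ppath k Q v γ • n = 0 := by
  let _ : Module k N := Module.compHom N (algebraMap k (PathAlg k Q.rev))
  let _ : Module (Leavitt k Q) (Germs k Q N) := Module.compHom _ (rho k Q N).toRingHom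
  have hsm : ∀ (l : Leavitt k Q) (x : Germs k Q N), l • x = rho k Q N l x := fun _ _ => rfl
  have hk : ∀ (c : k) (x : N), algebraMap k (PathAlg k Q.rev) c • x = c • x := fun _ _ => rfl
  let i : N →+ (Q.V → List Q.A → N) :=
    { toFun := fun n v γ => ppath k Q v γ • n
      map_zero' := by ext; simp
      map_add' := fun a b => by ext; simp }
  let h : N →+ Germs k Q N := (small k Q N).mkQ.toAddMonoidHom.comp i
  have hmk : ∀ n, h n = Submodule.Quotient.mk (i n) := fun _ => rfl
  have key : h n = 0 := by
    refine tensor_zero (revToLeavitt k Q).toRingHom h ?_ n hn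
    intro p
    change ∀ n, h (p • n) = revToLeavitt k Q p • h n
    obtain ⟨a, rfl⟩ := PathAlg.mk_surj k Q.rev p
    induction a using FreeAlgebra.induction with
    | grade0 r =>
      intro n
      rw [AlgHom.commutes, AlgHom.commutes, hsm, AlgHom.commutes]
      simp only [hmk, Module.algebraMap_end_apply]
      rw [← Submodule.Quotient.mk_smul]
      congr 1
      ext v γ
      change ppath k Q v γ • (algebraMap k (PathAlg k Q.rev) r • n) =
        algebraMap k (PathAlg k Q.rev) r • ppath k Q v γ • n
      rw [← mul_smul, ← mul_smul, Algebra.commutes]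
    | grade1 g =>
      intro n
      cases g with
      | vertex u =>
        change h (PathAlg.p k Q.rev u • n) = revToLeavitt k Q (PathAlg.p k Q.rev u) • _
        refine Eq.trans ?_ (congrArg (· • h n) (rev_p k Q u).symm)
        change h (PathAlg.p k Q.rev u • n) =
          rho k Q N (Leavitt.mk k Q (FreeAlgebra.ι k (LGen.vertex u))) (h n)
        rw [rho_mk, hmk, hmk]
        simp only [opGen, Submodule.mapQ_apply]
        rw [Submodule.Quotient.eq]
        refine ⟨0, fun v γ hγ => ?_⟩
        change ppath k Q v γ • (PathAlg.p k Q.rev u • n) -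
          (if v = (show Q.V from u) then ppath k Q v γ • n else 0) = 0
        have hp : ppath k Q v γ * PathAlg.p k Q.rev v = ppath k Q v γ := by
          cases γ with
          | nil => exact PathAlg.p_mul_self k Q.rev v
          | cons e l =>
            obtain ⟨rfl, -⟩ := hγ
            simp only [ppath, mul_assoc]
            congr 1
            exact PathAlg.arrow_mul_tgt k Q.rev e
        rw [sub_eq_zero, ← mul_smul]
        split_ifs with hv
        · subst hv; rw [hp]
        · rw [← hp, mul_assoc, PathAlg.p_mul_ne k Q.rev v u hv, mul_zero, zero_smul]
      | edge e =>
        change h (PathAlg.arrow k Q.rev e • n) = revToLeavitt k Q (PathAlg.arrow k Q.rev e) • _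
        refine Eq.trans ?_ (congrArg (· • h n) (rev_arrow k Q e).symm)
        change h (PathAlg.arrow k Q.rev e • n) =
          rho k Q N (Leavitt.mk k Q (FreeAlgebra.ι k (LGen.ghost e))) (h n)
        rw [rho_mk, hmk, hmk]
        simp only [opGen, Submodule.mapQ_apply]
        rw [Submodule.Quotient.eq]
        refine ⟨0, fun v γ hγ => ?_⟩
        change ppath k Q v γ • (PathAlg.arrow k Q.rev e • n) -
          (if v = Q.tgt e then (ppath k Q (Q.tgt e) γ * PathAlg.arrow k Q.rev e) • n else 0) = 0
        have hp : ppath k Q v γ * PathAlg.p k Q.rev v = ppath k Q v γ := by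
          cases γ with
          | nil => exact PathAlg.p_mul_self k Q.rev v
          | cons e l =>
            obtain ⟨rfl, -⟩ := hγ
            simp only [ppath, mul_assoc]
            congr 1
            exact PathAlg.arrow_mul_tgt k Q.rev e
        rw [sub_eq_zero, ← mul_smul]
        split_ifs with hv
        · rw [hv]
        · have h1 : PathAlg.p k Q.rev (Q.tgt e) * PathAlg.arrow k Q.rev e =
            PathAlg.arrow k Q.rev e := PathAlg.src_mul_arrow k Q.rev e
          have h2 : PathAlg.p k Q.rev v * PathAlg.arrow k Q.rev e = 0 := by
            rw [← h1, ← mul_assoc, PathAlg.p_mul_ne k Q.rev v _ hv, zero_mul]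
          rw [← hp, mul_assoc, h2, mul_zero, zero_smul]
    | mul a b ha hb =>
      intro n
      rw [map_mul, map_mul, mul_smul, mul_smul, ha, hb]
    | add a b ha hb =>
      intro n
      rw [map_add, map_add, add_smul, add_smul, map_add, ha, hb]
  rw [hmk, Submodule.Quotient.mk_eq_zero] at key
  exact key

theorem rightFlat_main :
    RightFlat (PathAlg k Q.rev) (Leavitt k Q) (revToLeavitt k Q).toRingHom := by
  intro M N _ _ _ _ f hf
  set φ := (revToLeavitt k Q).toRingHom with hφ
  have hφ' : ∀ x, φ x = revToLeavitt k Q x := fun _ => rfl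
  let j : M →+ TensorPhi (PathAlg k Q.rev) (Leavitt k Q) φ M :=
    { toFun := fun m => Submodule.Quotient.mk (1 ⊗ₜ[ℤ] m)
      map_zero' := by simp
      map_add' := fun a b => by rw [tmul_add, Submodule.Quotient.mk_add] }
  have hj : ∀ m, j m = Submodule.Quotient.mk (1 ⊗ₜ[ℤ] m) := fun _ => rfl
  have hjs : ∀ p m, revToLeavitt k Q p • j m = j (p • m) := by
    intro p m
    rw [hj, hj, ← Submodule.Quotient.mk_smul, Submodule.Quotient.eq]
    refine Submodule.subset_span ⟨1, p, m, ?_⟩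
    rw [TensorProduct.smul_tmul', smul_eq_mul, mul_one, one_mul, hφ']
  have hJ : ∀ (c : PathAlg k Q.rev), ∀ x ∈ j.range, revToLeavitt k Q c • x ∈ j.range := by
    rintro c _ ⟨m, rfl⟩
    exact ⟨c • m, (hjs c m).symm⟩
  rw [injective_iff_map_eq_zero]
  intro z hz
  have hfin : ∃ m, ∀ v γ, Bd Q m v γ → gpath k Q v γ • z ∈ j.range := by
    obtain ⟨t, rfl⟩ := Submodule.Quotient.mk_surjective _ z
    clear hz
    induction t with
    | zero =>
      exact ⟨0, fun v γ _ => by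
        rw [Submodule.Quotient.mk_zero, smul_zero]; exact j.range.zero_mem⟩
    | add a b ha hb =>
      obtain ⟨m, h⟩ := ha
      obtain ⟨n, h'⟩ := hb
      refine ⟨max m n, fun v γ hγ => ?_⟩
      rw [Submodule.Quotient.mk_add, smul_add]
      exact j.range.add_mem (h v γ (hγ.anti (le_max_left _ _)))
        (h' v γ (hγ.anti (le_max_right _ _)))
    | tmul l m =>
      have h1 : (Submodule.Quotient.mk (l ⊗ₜ[ℤ] m) :
          TensorPhi (PathAlg k Q.rev) (Leavitt k Q) φ M) = l • j m := by
        rw [hj, ← Submodule.Quotient.mk_smul, TensorProduct.smul_tmul', smul_eq_mul, mul_one]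
      rw [h1]
      refine absorb k Q j.range hJ l (j m) ⟨0, fun v γ _ => ?_⟩
      rw [← rev_ppath]
      exact hJ _ _ ⟨m, rfl⟩
  obtain ⟨m, hm⟩ := hfin
  refine vanish k Q m z fun v γ hγ => ?_
  obtain ⟨y, hy⟩ := hm v γ hγ
  rw [← hy]
  have h0 : tmap _ _ φ f (j y) = 0 := by
    rw [hy, map_smul, hz, smul_zero]
  have h1 : (1 : Leavitt k Q) ⊗ₜ[ℤ] (f y) ∈ trel (PathAlg k Q.rev) (Leavitt k Q) φ N :=
    (Submodule.Quotient.mk_eq_zero _).1 h0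
  obtain ⟨n, hn⟩ := torsion k Q N (f y) h1
  refine vanish k Q n _ fun w δ hδ => ?_
  rw [← rev_ppath, hjs]
  have : ppath k Q w δ • y = 0 := hf (by rw [map_smul, hn w δ hδ, map_zero])
  rw [this, map_zero]

end aux

end LPA

open LPA in
/-- The Leavitt path algebra `L_k(E)` is flat as a right `P_k(Ē)`-module, where
`Ē` is the inverse quiver of `E` and `P_k(Ē)` is embedded in `L_k(E)` by `p_i ↦ p_i`,
`ē ↦ ē`. -/
theorem statement_8 (k : Type) [Field k] (Q : FinQuiver) :
    RightFlat (PathAlg k Q.rev) (Leavitt k Q) (revToLeavitt k Q).toRingHom := by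
  exact rightFlat_main k Q
end

section
/- Let R = P_k(Ē) be the path algebra of the inverse quiver of a finite quiver E. The category of left R-modules of finite k-dimension coincides with the category of finite-length objects in the abelian category fp(R) of finitely presented left R-modules. In particular: every finite-dimensional left R-module is finitely presented; and every simple object of fp(R) (a finitely presented module with no finitely presented proper nonzero submodules arising in fp(R)) is finite-dimensional over k. -/
namespace LPA

/-- `X` is a simple object of the category `fp(R)` of finitely presented modules: it is
nontrivial and has no finitely presented submodules other than `⊥` and `⊤`. -/
def FpSimple (R X : Type) [Ring R] [AddCommGroup X] [Module R X] : Prop :=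
  Nontrivial X ∧
    ∀ N : Submodule R X, Module.FinitePresentation R ↥N → N = ⊥ ∨ N = ⊤

/-- A composition series for `M` inside the abelian category `fp(R)`: a chain of finitely
presented submodules from `⊥` to `⊤` whose factors are simple objects of `fp(R)`. -/
def IsFpCompSeries {R M : Type} [Ring R] [AddCommGroup M] [Module R M] (ℓ : ℕ)
    (c : Fin (ℓ + 1) → Submodule R M) : Prop :=
  c 0 = ⊥ ∧ c (Fin.last ℓ) = ⊤ ∧ (∀ i : Fin (ℓ + 1), Module.FinitePresentation R ↥(c i)) ∧
    ∀ i : Fin ℓ, c i.castSucc < c i.succ ∧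
      FpSimple R (↥(c i.succ) ⧸ Submodule.comap (c i.succ).subtype (c i.castSucc))

end LPA

namespace LPA

open TensorProduct

section Helpers

theorem pathAlg_induction {k : Type} [CommRing k] {Q : FinQuiver} {C : PathAlg k Q → Prop}
    (h0 : ∀ c : k, C (algebraMap k (PathAlg k Q) c))
    (hp : ∀ v, C (PathAlg.p k Q v)) (he : ∀ e, C (PathAlg.arrow k Q e))
    (hm : ∀ a b, C a → C b → C (a * b)) (ha : ∀ a b, C a → C b → C (a + b))
    (r : PathAlg k Q) : C r := by
  obtain ⟨x, rfl⟩ : ∃ x, PathAlg.mk k Q x = r := RingQuot.mkAlgHom_surjective k (PathRel k Q) r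
  induction x using FreeAlgebra.induction with
  | grade0 c => rw [AlgHom.commutes]; exact h0 c
  | grade1 x =>
    cases x with
    | vertex v => exact hp v
    | edge e => exact he e
  | mul a b iha ihb => rw [map_mul]; exact hm _ _ iha ihb
  | add a b iha ihb => rw [map_add]; exact ha _ _ iha ihb

theorem pathAlg_lift {k : Type} [CommRing k] {Q : FinQuiver} {B : Type} [Ring B] [Algebra k B]
    (P : Q.V → B) (W : Q.A → B)
    (h1 : ∀ v, P v * P v = P v) (h2 : ∀ v w, v ≠ w → P v * P w = 0) (h3 : ∑ v, P v = 1)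
    (h4 : ∀ e, P (Q.src e) * W e = W e) (h5 : ∀ e, W e * P (Q.tgt e) = W e) :
    ∃ Φ : PathAlg k Q →ₐ[k] B, (∀ v, Φ (PathAlg.p k Q v) = P v) ∧
      ∀ e, Φ (PathAlg.arrow k Q e) = W e := by
  let f : FreeAlgebra k (PathGen Q) →ₐ[k] B := FreeAlgebra.lift k
    (fun g => match g with | .vertex v => P v | .edge e => W e)
  have hfv : ∀ v, f (FreeAlgebra.ι k (PathGen.vertex v)) = P v := fun v => by simp [f]
  have hfe : ∀ v, f (FreeAlgebra.ι k (PathGen.edge v)) = W v := fun v => by simp [f]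
  have hf : ∀ ⦃x y⦄, PathRel k Q x y → f x = f y := by
    intro x y h
    cases h with
    | vertex_mul_self v => simp [hfv, h1]
    | vertex_mul_ne v w h => simp [hfv, h2 v w h]
    | sum_vertex => simp [hfv, h3]
    | src_mul e => simp [hfv, hfe, h4]
    | mul_tgt e => simp [hfv, hfe, h5]
  refine ⟨RingQuot.liftAlgHom k ⟨f, hf⟩, fun v => ?_, fun e => ?_⟩
  · rw [← hfv v]; exact RingQuot.liftAlgHom_mkAlgHom_apply k f hf _
  · rw [← hfe e]; exact RingQuot.liftAlgHom_mkAlgHom_apply k f hf _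

/-- Extend a `k`-linear map `U → N` to an `R`-linear map `R ⊗ U → N`. -/
noncomputable def tl {k R U N : Type} [Field k] [Ring R] [Algebra k R] [AddCommGroup U] [Module k U]
    [AddCommGroup N] [Module k N] [Module R N] [IsScalarTower k R N] (g : U →ₗ[k] N) :
    R ⊗[k] U →ₗ[R] N :=
  TensorProduct.AlgebraTensorModule.lift (LinearMap.toSpanSingleton R (U →ₗ[k] N) g)

theorem tl_tmul {k R U N : Type} [Field k] [Ring R] [Algebra k R] [AddCommGroup U] [Module k U]
    [AddCommGroup N] [Module k N] [Module R N] [IsScalarTower k R N] (g : U →ₗ[k] N) (r : R)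
    (u : U) : tl g (r ⊗ₜ[k] u) = r • g u := by
  simp [tl]

/-- A derivation with given values on arrows, vanishing on vertices. -/
theorem exists_derivation {k : Type} [Field k] {Q : FinQuiver} {U N : Type}
    [AddCommGroup U] [Module k U] [Module (PathAlg k Q) U] [IsScalarTower k (PathAlg k Q) U]
    [AddCommGroup N] [Module k N] [Module (PathAlg k Q) N] [IsScalarTower k (PathAlg k Q) N]
    (d : Q.A → U →ₗ[k] N)
    (hs : ∀ e u, PathAlg.p k Q (Q.src e) • d e u = d e u)
    (ht : ∀ e u, d e (PathAlg.p k Q (Q.tgt e) • u) = d e u) :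
    ∃ D : PathAlg k Q →ₗ[k] U →ₗ[k] N,
      (∀ c : k, D (algebraMap k _ c) = 0) ∧ (∀ v, D (PathAlg.p k Q v) = 0) ∧
      (∀ e, D (PathAlg.arrow k Q e) = d e) ∧
      ∀ r s u, D (r * s) u = r • D s u + D r (s • u) := by
  let ac : PathAlg k Q → Module.End k (N × U) := fun r => Algebra.lsmul k k (N × U) r
  have hac : ∀ r x, ac r x = r • x := fun r x => rfl
  let dd : Q.A → Module.End k (N × U) := fun e =>
    (LinearMap.inl k N U) ∘ₗ (d e) ∘ₗ (LinearMap.snd k N U)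
  have hdd : ∀ e x, dd e x = (d e x.2, 0) := fun e x => rfl
  obtain ⟨Φ, hv, he⟩ := pathAlg_lift (k := k) (Q := Q) (B := Module.End k (N × U))
    (fun v => ac (PathAlg.p k Q v)) (fun e => ac (PathAlg.arrow k Q e) + dd e)
    (fun v => by
      refine LinearMap.ext fun x => ?_
      simp only [Module.End.mul_apply, hac, ← mul_smul, PathAlg.p_mul_self])
    (fun v w h => by
      refine LinearMap.ext fun x => ?_
      simp only [Module.End.mul_apply, hac, ← mul_smul, PathAlg.p_mul_ne k Q v w h, zero_smul,
        LinearMap.zero_apply])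
    (by
      refine LinearMap.ext fun x => ?_
      simp only [LinearMap.sum_apply, hac, ← Finset.sum_smul, PathAlg.sum_p, one_smul,
        Module.End.one_apply])
    (fun e => by
      refine LinearMap.ext fun x => ?_
      simp only [Module.End.mul_apply, LinearMap.add_apply, hac, hdd, smul_add, ← mul_smul,
        PathAlg.src_mul_arrow, Prod.smul_mk, hs, smul_zero])
    (fun e => by
      refine LinearMap.ext fun x => ?_
      simp only [Module.End.mul_apply, LinearMap.add_apply, hac, hdd, ← mul_smul,
        PathAlg.arrow_mul_tgt, Prod.smul_snd, ht])
  have key : ∀ r : PathAlg k Q, (∀ x, Φ r (x, 0) = (r • x, 0)) ∧ ∀ u, (Φ r (0, u)).2 = r • u := by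
    intro r
    induction r using pathAlg_induction with
    | h0 c => 
      simp [Algebra.algebraMap_eq_smul_one]
    | hp v => simp [hv, hac]
    | he e => simp [he, hac, hdd]
    | hm a b iha ihb =>
      refine ⟨fun x => by simp [ihb.1, iha.1, mul_smul], fun u => ?_⟩
      have : Φ b (0, u) = ((Φ b (0, u)).1, 0) + (0, b • u) := by
        rw [← ihb.2 u]; simp
      rw [map_mul, Module.End.mul_apply, this, map_add, iha.1, Prod.snd_add, iha.2, mul_smul]
      simp
    | ha a b iha ihb =>
      refine ⟨fun x => by simp [ihb.1, iha.1, add_smul], fun u => ?_⟩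
      simp [iha.2, ihb.2, add_smul]
  let D : PathAlg k Q →ₗ[k] U →ₗ[k] N := LinearMap.mk₂ k (fun r u => (Φ r (0, u)).1)
    (by simp) (by simp) (fun r u u' => by
      have : ((0 : N), u + u') = (0, u) + (0, u') := by simp
      rw [this, map_add]; simp)
    (fun c r u => by
      have : ((0 : N), c • u) = c • (0, u) := by simp
      rw [this, map_smul]; simp)
  have hD : ∀ r u, D r u = (Φ r (0, u)).1 := fun r u => rfl
  refine ⟨D, fun c => ?_, fun v => ?_, fun e => ?_, fun r s u => ?_⟩
  · refine LinearMap.ext fun u => ?_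
    simp [hD, Algebra.algebraMap_eq_smul_one]
  · refine LinearMap.ext fun u => ?_
    simp [hD, hv, hac]
  · refine LinearMap.ext fun u => ?_
    simp [hD, he, hac, hdd]
  · have : Φ s (0, u) = ((Φ s (0, u)).1, 0) + (0, s • u) := by
      rw [← (key s).2 u]; simp
    rw [hD, map_mul, Module.End.mul_apply, this, map_add, (key r).1]
    rfl

theorem exists_split {k : Type} [Field k] {Q : FinQuiver} {U F : Type}
    [AddCommGroup U] [Module k U] [Module (PathAlg k Q) U] [IsScalarTower k (PathAlg k Q) U]
    [AddCommGroup F] [Module (PathAlg k Q) F] [Module.Projective (PathAlg k Q) F]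
    (f : F →ₗ[PathAlg k Q] U) (hf : Function.Surjective f) :
    ∃ (a : LinearMap.ker f →ₗ[PathAlg k Q] (Q.A → (PathAlg k Q) ⊗[k] U) × F)
      (b : (Q.A → (PathAlg k Q) ⊗[k] U) × F →ₗ[PathAlg k Q] LinearMap.ker f),
      b ∘ₗ a = LinearMap.id := by
  let R := PathAlg k Q
  let p := PathAlg.p k Q
  let w := PathAlg.arrow k Q
  -- the evaluation map
  let π : R ⊗[k] U →ₗ[R] U := tl LinearMap.id
  have hπ : ∀ r u, π (r ⊗ₜ u) = r • u := fun r u => tl_tmul _ _ _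
  let ε : R ⊗[k] U →ₗ[R] R ⊗[k] U :=
    tl (∑ v, (TensorProduct.mk k R U (p v)) ∘ₗ (Algebra.lsmul k k U (p v)))
  have hε : ∀ r u, ε (r ⊗ₜ u) = ∑ v, (r * p v) ⊗ₜ (p v • u) := fun r u => by
    simp [ε, tl_tmul, LinearMap.sum_apply, Finset.smul_sum, TensorProduct.smul_tmul']
  have hεp : ∀ r u v, ε ((r * p v) ⊗ₜ u) = (r * p v) ⊗ₜ (p v • u) := fun r u v => by
    rw [hε, Finset.sum_eq_single v]
    · rw [mul_assoc, PathAlg.p_mul_self]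
    · intro w _ h
      rw [mul_assoc, PathAlg.p_mul_ne k Q v w h.symm, mul_zero, TensorProduct.zero_tmul]
    · simp
  have hεp' : ∀ r u v, ε (r ⊗ₜ (p v • u)) = (r * p v) ⊗ₜ (p v • u) := fun r u v => by
    rw [hε, Finset.sum_eq_single v]
    · rw [← mul_smul, PathAlg.p_mul_self]
    · intro w _ h
      rw [← mul_smul, PathAlg.p_mul_ne k Q w v h, zero_smul, TensorProduct.tmul_zero]
    · simp
  have hεε : ∀ t, ε (ε t) = ε t := fun t => by
    induction t using TensorProduct.induction_on with
    | zero => simp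
    | tmul r u =>
      rw [hε, map_sum]
      refine Finset.sum_congr rfl fun v _ => ?_
      rw [hεp, ← mul_smul, PathAlg.p_mul_self]
    | add a b ha hb => simp [ha, hb]
  have hπε : ∀ t, π (ε t) = π t := fun t => by
    induction t using TensorProduct.induction_on with
    | zero => simp
    | tmul r u =>
      rw [hε, map_sum, hπ]
      have : ∀ v, π ((r * p v) ⊗ₜ (p v • u)) = (r * p v) • u := fun v => by
        rw [hπ, ← mul_smul, mul_assoc, PathAlg.p_mul_self]
      simp only [this]
      rw [← Finset.sum_smul, ← Finset.mul_sum, PathAlg.sum_p, mul_one]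
    | add a b ha hb => simp [ha, hb]
  -- the derivation
  let d : Q.A → U →ₗ[k] (Q.A → R ⊗[k] U) := fun e =>
    (LinearMap.single k (fun _ : Q.A => R ⊗[k] U) e) ∘ₗ (TensorProduct.mk k R U (p (Q.src e))) ∘ₗ
      (Algebra.lsmul k k U (p (Q.tgt e)))
  have hd : ∀ e u, d e u = Pi.single e (p (Q.src e) ⊗ₜ (p (Q.tgt e) • u)) := fun e u => rfl
  obtain ⟨D, hD0, hDp, hDe, hDm⟩ := exists_derivation (k := k) (Q := Q) d
    (fun e u => by
      rw [hd, ← Pi.single_smul, TensorProduct.smul_tmul', smul_eq_mul, PathAlg.p_mul_self])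
    (fun e u => by
      rw [hd, hd, ← mul_smul, PathAlg.p_mul_self])
  let φ : (Q.A → R ⊗[k] U) →ₗ[R] R ⊗[k] U := ∑ e, 
    (ε ∘ₗ tl ((TensorProduct.mk k R U (w e)) - (TensorProduct.mk k R U 1) ∘ₗ
      (Algebra.lsmul k k U (w e)))) ∘ₗ LinearMap.proj e
  have hφ : ∀ e r u, φ (Pi.single e (r ⊗ₜ u)) = ε ((r * w e) ⊗ₜ u - r ⊗ₜ (w e • u)) := by
    intro e r u
    simp only [φ, LinearMap.sum_apply, LinearMap.comp_apply, LinearMap.proj_apply]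
    rw [Finset.sum_eq_single e]
    · rw [Pi.single_eq_same, tl_tmul]
      simp [smul_sub, TensorProduct.smul_tmul']
    · intro e' _ h
      rw [Pi.single_eq_of_ne h]; simp
    · simp
  have hπφ : ∀ x, π (φ x) = 0 := by
    intro x
    simp only [φ, LinearMap.sum_apply, LinearMap.comp_apply, LinearMap.proj_apply, map_sum, hπε]
    refine Finset.sum_eq_zero fun e _ => ?_
    induction x e using TensorProduct.induction_on with
    | zero => simp
    | tmul r u => 
      rw [tl_tmul, map_smul]
      simp [hπ]
    | add a b ha hb => simp only [map_add, ha, hb, add_zero]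
  have hφD : ∀ r u, φ (D r u) = ε (r ⊗ₜ u - 1 ⊗ₜ (r • u)) := by
    intro r
    induction r using pathAlg_induction with
    | h0 c =>
      intro u
      rw [hD0]
      simp [Algebra.algebraMap_eq_smul_one, TensorProduct.smul_tmul]
    | hp v =>
      intro u
      rw [hDp, map_sub, hεp', ← one_mul (PathAlg.p k Q v), hεp]
      simp [p]
    | he e =>
      intro u
      rw [hDe, hd, hφ, map_sub, map_sub, ← mul_smul, PathAlg.src_mul_arrow, PathAlg.arrow_mul_tgt]
      congr 1
      · have := hεp' (w e) u (Q.tgt e)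
        rw [this]
        have := hεp (w e) u (Q.tgt e)
        rw [← this, PathAlg.arrow_mul_tgt]
      · have h1 : w e • u = p (Q.src e) • w e • u := by rw [← mul_smul, PathAlg.src_mul_arrow]
        have := hεp' 1 (w e • u) (Q.src e)
        rw [← h1] at this
        rw [this]
        have := hεp 1 (w e • u) (Q.src e)
        rw [one_mul, ← h1] at this
        rw [one_mul]
        exact this
    | hm a b iha ihb =>
      intro u
      rw [hDm, map_add, map_smul, ihb, iha, ← map_smul, ← map_add]
      congr 1
      simp [smul_sub, TensorProduct.smul_tmul', mul_smul]
    | ha a b iha ihb =>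
      intro u
      rw [map_add, LinearMap.add_apply, map_add, iha, ihb, ← map_add]
      congr 1
      simp only [TensorProduct.add_tmul, add_smul, TensorProduct.tmul_add]
      abel
  let δ : R ⊗[k] U →ₗ[k] (Q.A → R ⊗[k] U) := TensorProduct.lift D
  have hδ : ∀ (s : R) t, δ (s • t) = s • δ t + D s (π t) := fun s t => by
    induction t using TensorProduct.induction_on with
    | zero => simp
    | tmul r u =>
      simp only [δ, TensorProduct.smul_tmul', TensorProduct.lift.tmul, smul_eq_mul, hDm, hπ]
    | add a b ha hb => rw [smul_add, map_add, ha, hb, map_add, map_add, map_add, smul_add]; abel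
  have hφδ : ∀ t, φ (δ t) = ε (t - 1 ⊗ₜ π t) := fun t => by
    induction t using TensorProduct.induction_on with
    | zero => simp
    | tmul r u => simp only [δ, TensorProduct.lift.tmul, hφD, hπ]
    | add a b ha hb => 
      rw [map_add, map_add, ha, hb, ← map_add, map_add π, TensorProduct.tmul_add]
      congr 1; abel
  have hπs : Function.Surjective π := fun u => ⟨1 ⊗ₜ u, by rw [hπ, one_smul]⟩
  obtain ⟨h₀, hh₀⟩ := Module.projective_lifting_property π f hπs
  obtain ⟨j, hj⟩ := Module.projective_lifting_property f π hf
  let h := ε ∘ₗ h₀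
  have hh : ∀ y, π (h y) = f y := fun y => by
    simp only [h, LinearMap.comp_apply, hπε]
    exact LinearMap.congr_fun hh₀ y
  have hεh : ∀ y, ε (h y) = h y := fun y => by simp only [h, LinearMap.comp_apply, hεε]
  have hj' : ∀ t, f (j t) = π t := fun t => LinearMap.congr_fun hj t
  have hker : ∀ l : LinearMap.ker f, π (h l) = 0 := fun l => by rw [hh]; exact l.2
  let a₁ : LinearMap.ker f →ₗ[R] (Q.A → R ⊗[k] U) :=
    { toFun := fun l => δ (h l)
      map_add' := fun x y => by simp
      map_smul' := fun r x => by
        simp only [Submodule.coe_smul, map_smul, hδ, hker, map_zero, add_zero, RingHom.id_apply] }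
  let b₁ : (Q.A → R ⊗[k] U) × F →ₗ[R] F :=
    (j ∘ₗ φ) ∘ₗ LinearMap.fst R _ _ + (LinearMap.id - j ∘ₗ h) ∘ₗ LinearMap.snd R _ _
  have hb₁ : ∀ x y, b₁ (x, y) = j (φ x) + (y - j (h y)) := fun x y => rfl
  refine ⟨a₁.prod (LinearMap.ker f).subtype, b₁.codRestrict _ ?_, ?_⟩
  · rintro ⟨x, y⟩
    rw [LinearMap.mem_ker, hb₁, map_add, map_sub, hj', hj', hh, hπφ]
    simp
  · refine LinearMap.ext fun l => Subtype.ext ?_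
    change b₁ (δ (h l), (l : F)) = l
    rw [hb₁, hφδ, hker, TensorProduct.tmul_zero, sub_zero, hεh]
    abel

theorem projective_submodule {k : Type} [Field k] {Q : FinQuiver} {F : Type}
    [AddCommGroup F] [Module (PathAlg k Q) F] [Module k F] [IsScalarTower k (PathAlg k Q) F]
    [Module.Projective (PathAlg k Q) F]
    (L : Submodule (PathAlg k Q) F) : Module.Projective (PathAlg k Q) L := by
  obtain ⟨a, b, hab⟩ := exists_split (k := k) L.mkQ L.mkQ_surjective
  have : Module.Projective (PathAlg k Q) (LinearMap.ker L.mkQ) := Module.Projective.of_split a b hab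
  rwa [Submodule.ker_mkQ] at this

theorem fp_of_finiteDimensional {k : Type} [Field k] {Q : FinQuiver} {U : Type}
    [AddCommGroup U] [Module k U] [Module (PathAlg k Q) U] [IsScalarTower k (PathAlg k Q) U]
    [FiniteDimensional k U] : Module.FinitePresentation (PathAlg k Q) U := by
  let π : (PathAlg k Q) ⊗[k] U →ₗ[PathAlg k Q] U := tl LinearMap.id
  have hπs : Function.Surjective π := fun u => ⟨1 ⊗ₜ u, by simp [π, tl_tmul]⟩
  obtain ⟨a, b, hab⟩ := exists_split (k := k) π hπs
  have hb : Function.Surjective b := fun x => ⟨a x, LinearMap.congr_fun hab x⟩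
  have : Module.Finite (PathAlg k Q) (LinearMap.ker π) := Module.Finite.of_surjective b hb
  have : Module.FinitePresentation (PathAlg k Q) ((PathAlg k Q) ⊗[k] U) :=
    Module.finitePresentation_of_projective _ _
  exact Module.finitePresentation_of_surjective π hπs (Module.Finite.iff_fg.mp ‹_›)

theorem fp_of_fg {k : Type} [Field k] {Q : FinQuiver} {M : Type}
    [AddCommGroup M] [Module (PathAlg k Q) M] (hM : Module.FinitePresentation (PathAlg k Q) M)
    (N : Submodule (PathAlg k Q) M) (hN : N.FG) : Module.FinitePresentation (PathAlg k Q) N := by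
  obtain ⟨s, hs, hk⟩ := hM.out
  set f := Finsupp.linearCombination (PathAlg k Q) (Subtype.val : s → M) with hf
  have hfs : Function.Surjective f := by
    rw [← LinearMap.range_eq_top, hf, Finsupp.range_linearCombination]
    simpa using hs
  have hL : (N.comap f).FG := by
    refine Submodule.fg_of_fg_map_of_fg_inf_ker f ?_ ?_
    · rwa [Submodule.map_comap_eq_of_surjective hfs]
    · rwa [inf_eq_right.mpr]
      exact Submodule.comap_mono bot_le
  have hproj : Module.Projective (PathAlg k Q) (N.comap f) := projective_submodule _
  have : Module.Finite (PathAlg k Q) (N.comap f) := Module.Finite.iff_fg.mpr hL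
  have : Module.FinitePresentation (PathAlg k Q) (N.comap f) :=
    Module.finitePresentation_of_projective (PathAlg k Q) (N.comap f)
  let g : N.comap f →ₗ[PathAlg k Q] N := f.restrict (fun x hx => hx)
  have hg : ∀ x, (g x : M) = f x := fun x => rfl
  refine Module.finitePresentation_of_surjective (M := N.comap f) g ?_ ?_
  · rintro ⟨n, hn⟩
    obtain ⟨y, rfl⟩ := hfs n
    exact ⟨⟨y, hn⟩, rfl⟩
  · refine Submodule.fg_of_fg_map_injective (N.comap f).subtype (Submodule.subtype_injective _) ?_
    convert hk using 1
    ext y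
    simp only [Submodule.mem_map, LinearMap.mem_ker]
    constructor
    · rintro ⟨x, hx, rfl⟩
      have := congrArg Subtype.val hx
      exact this
    · intro hy
      refine ⟨⟨y, ?_⟩, Subtype.ext hy, rfl⟩
      rw [Submodule.mem_comap, hy]; exact N.zero_mem

/-- An algebra action on a subspace that agrees with the module action where defined. -/
def Compat {k : Type} [Field k] {Q : FinQuiver} {M : Type}
    [AddCommGroup M] [Module (PathAlg k Q) M] [Module k M]
    (U : Submodule k M) (Ψ : PathAlg k Q →ₐ[k] Module.End k U) : Prop :=
  (∀ v u, (Ψ (PathAlg.p k Q v) u : M) = PathAlg.p k Q v • (u : M)) ∧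
  ∀ e (u : U), PathAlg.arrow k Q e • (u : M) ∈ U →
    (Ψ (PathAlg.arrow k Q e) u : M) = PathAlg.arrow k Q e • (u : M)

theorem compat_good {k : Type} [Field k] {Q : FinQuiver} {M : Type}
    [AddCommGroup M] [Module (PathAlg k Q) M] [Module k M] [IsScalarTower k (PathAlg k Q) M]
    (r : PathAlg k Q) : ∀ x : M, ∃ U₀ : Submodule k M, FiniteDimensional k U₀ ∧
      ∀ (U : Submodule k M) (Ψ : PathAlg k Q →ₐ[k] Module.End k U), U₀ ≤ U → Compat U Ψ →
        ∀ u : U, (u : M) = x → (Ψ r u : M) = r • x := by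
  induction r using pathAlg_induction with
  | h0 c =>
    intro x
    refine ⟨⊥, inferInstance, fun U Ψ _ _ u hu => ?_⟩
    simp [Algebra.algebraMap_eq_smul_one, hu]
  | hp v =>
    intro x
    refine ⟨⊥, inferInstance, fun U Ψ _ h u hu => ?_⟩
    rw [h.1, hu]
  | he e =>
    intro x
    refine ⟨Submodule.span k {PathAlg.arrow k Q e • x}, inferInstance, fun U Ψ hU h u hu => ?_⟩
    rw [h.2, hu]
    rw [hu]
    exact hU (Submodule.mem_span_singleton_self _)
  | hm a b iha ihb =>
    intro x
    obtain ⟨U₁, h₁, H₁⟩ := ihb x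
    obtain ⟨U₂, h₂, H₂⟩ := iha (b • x)
    refine ⟨U₁ ⊔ U₂, inferInstance, fun U Ψ hU h u hu => ?_⟩
    rw [map_mul, Module.End.mul_apply, mul_smul]
    exact H₂ U Ψ (le_sup_right.trans hU) h _ (H₁ U Ψ (le_sup_left.trans hU) h _ hu)
  | ha a b iha ihb =>
    intro x
    obtain ⟨U₁, h₁, H₁⟩ := iha x
    obtain ⟨U₂, h₂, H₂⟩ := ihb x
    refine ⟨U₁ ⊔ U₂, inferInstance, fun U Ψ hU h u hu => ?_⟩
    rw [map_add, LinearMap.add_apply, add_smul, Submodule.coe_add,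
      H₁ U Ψ (le_sup_left.trans hU) h _ hu, H₂ U Ψ (le_sup_right.trans hU) h _ hu]

theorem exists_compat {k : Type} [Field k] {Q : FinQuiver} {M : Type}
    [AddCommGroup M] [Module (PathAlg k Q) M] [Module k M] [IsScalarTower k (PathAlg k Q) M]
    (U : Submodule k M) (hU : ∀ v, ∀ u ∈ U, PathAlg.p k Q v • u ∈ U) :
    ∃ Ψ : PathAlg k Q →ₐ[k] Module.End k U, Compat U Ψ := by
  let P : Q.V → Module.End k U := fun v =>
    (Algebra.lsmul k k M (PathAlg.p k Q v) : M →ₗ[k] M).restrict (hU v)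
  have hP : ∀ v u, (P v u : M) = PathAlg.p k Q v • (u : M) := fun v u => rfl
  have hW : ∀ e : Q.A, ∃ W : Module.End k U, ∀ u : U, PathAlg.arrow k Q e • (u : M) ∈ U →
      (W u : M) = PathAlg.arrow k Q e • (u : M) := by
    intro e
    let m : U →ₗ[k] M := (Algebra.lsmul k k M (PathAlg.arrow k Q e) : M →ₗ[k] M) ∘ₗ U.subtype
    let g : U.comap m →ₗ[k] U := m.restrict (fun x hx => hx)
    obtain ⟨W, hW⟩ := LinearMap.exists_extend g
    refine ⟨W, fun u hu => ?_⟩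
    have := LinearMap.congr_fun hW ⟨u, hu⟩
    exact congrArg Subtype.val this
  choose W hW using hW
  have hPP : ∀ v, P v * P v = P v := fun v => by
    refine LinearMap.ext fun u => Subtype.ext ?_
    simp only [Module.End.mul_apply, hP, ← mul_smul, PathAlg.p_mul_self]
  obtain ⟨Ψ, hv, he⟩ := pathAlg_lift (k := k) (Q := Q) P
    (fun e => P (Q.src e) * W e * P (Q.tgt e)) hPP
    (fun v w h => by
      refine LinearMap.ext fun u => Subtype.ext ?_
      simp only [Module.End.mul_apply, hP, ← mul_smul, PathAlg.p_mul_ne k Q v w h, zero_smul]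
      rfl)
    (by
      refine LinearMap.ext fun u => Subtype.ext ?_
      simp only [LinearMap.sum_apply, Submodule.coe_sum, hP, ← Finset.sum_smul, PathAlg.sum_p,
        one_smul, Module.End.one_apply])
    (fun e => by rw [← mul_assoc, ← mul_assoc, hPP])
    (fun e => by rw [mul_assoc, hPP])
  refine ⟨Ψ, fun v u => by rw [hv, hP], fun e u hu => ?_⟩
  have h1 : PathAlg.arrow k Q e • ((P (Q.tgt e) u : U) : M) = PathAlg.arrow k Q e • (u : M) := by
    rw [hP, ← mul_smul, PathAlg.arrow_mul_tgt]
  rw [he, Module.End.mul_apply, Module.End.mul_apply, hP, hW, h1, ← mul_smul,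
    PathAlg.src_mul_arrow]
  rwa [h1]

theorem exists_closure {k : Type} [Field k] {Q : FinQuiver} {M : Type}
    [AddCommGroup M] [Module (PathAlg k Q) M] [Module k M] [IsScalarTower k (PathAlg k Q) M]
    (U₀ : Submodule k M) [FiniteDimensional k U₀] :
    ∃ U : Submodule k M, U₀ ≤ U ∧ FiniteDimensional k U ∧
      ∀ v, ∀ u ∈ U, PathAlg.p k Q v • u ∈ U := by
  let m : Q.V → M →ₗ[k] M := fun v => Algebra.lsmul k k M (PathAlg.p k Q v)
  have hm : ∀ v x, m v x = PathAlg.p k Q v • x := fun v x => rfl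
  refine ⟨⨆ v, U₀.map (m v), fun u hu => ?_, inferInstance, fun v u hu => ?_⟩
  · have : u = ∑ v, m v u := by
      simp only [hm, ← Finset.sum_smul, PathAlg.sum_p, one_smul]
    rw [this]
    exact Submodule.sum_mem _ fun v _ =>
      Submodule.mem_iSup_of_mem v (Submodule.mem_map_of_mem hu)
  · have : (⨆ v, U₀.map (m v)) ≤ (⨆ v, U₀.map (m v)).comap (m v) := by
      refine iSup_le fun w => ?_
      rintro _ ⟨x, hx, rfl⟩
      rw [Submodule.mem_comap, hm, hm, ← mul_smul]
      by_cases h : v = w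
      · subst h
        rw [PathAlg.p_mul_self]
        exact Submodule.mem_iSup_of_mem v (Submodule.mem_map_of_mem hx)
      · rw [PathAlg.p_mul_ne k Q v w h, zero_smul]
        exact Submodule.zero_mem _
    exact this hu

theorem finiteDimensional_of_fpSimple {k : Type} [Field k] {Q : FinQuiver} {M : Type}
    [AddCommGroup M] [Module (PathAlg k Q) M] [Module k M] [IsScalarTower k (PathAlg k Q) M]
    (hM : Module.FinitePresentation (PathAlg k Q) M) (hS : FpSimple (PathAlg k Q) M) :
    FiniteDimensional k M := by
  obtain ⟨s, hs, T, hT⟩ := hM.out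
  set f := Finsupp.linearCombination (PathAlg k Q) (Subtype.val : s → M) with hf
  have hfs : Function.Surjective f := by
    rw [← LinearMap.range_eq_top, hf, Finsupp.range_linearCombination]
    simpa using hs
  choose G hGf hG using fun (r : PathAlg k Q) (x : M) => compat_good r x
  let U₁ : Submodule k M := Submodule.span k (s : Set M) ⊔
    ⨆ t : T, ⨆ i : s, G (t.1 i) i
  have : FiniteDimensional k U₁ := by
    have : ∀ r x, FiniteDimensional k (G r x) := hGf
    have : FiniteDimensional k (Submodule.span k (s : Set M)) :=
      FiniteDimensional.span_finset k s
    infer_instance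
  obtain ⟨U, hU₁, hUf, hUp⟩ := exists_closure (Q := Q) U₁
  obtain ⟨Ψ, hΨ⟩ := exists_compat U hUp
  let _ : Module (PathAlg k Q) U := Module.compHom U Ψ.toRingHom
  have hsm : ∀ (r : PathAlg k Q) (u : U), r • u = Ψ r u := fun r u => rfl
  have : IsScalarTower k (PathAlg k Q) U := ⟨fun c r u => by
    rw [hsm, hsm, map_smul, LinearMap.smul_apply]⟩
  have hsU : ∀ i : s, (i : M) ∈ U := fun i =>
    hU₁ (le_sup_left (a := Submodule.span k (s : Set M)) (Submodule.subset_span i.2))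
  let f' := Finsupp.linearCombination (PathAlg k Q) (fun i : s => (⟨i, hsU i⟩ : U))
  have hker : LinearMap.ker f ≤ LinearMap.ker f' := by
    rw [← hT, Submodule.span_le]
    intro t ht
    have htk : f t = 0 := by
      have : t ∈ LinearMap.ker f := hT ▸ Submodule.subset_span ht
      exact this
    rw [SetLike.mem_coe, LinearMap.mem_ker]
    apply Subtype.ext
    rw [Submodule.coe_zero, ← htk]
    simp only [f, f', Finsupp.linearCombination_apply, Finsupp.sum, Submodule.coe_sum, hsm]
    refine Finset.sum_congr rfl fun i _ => ?_
    refine hG (t i) i U Ψ ?_ hΨ _ rfl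
    refine le_trans ?_ (le_sup_right.trans hU₁)
    exact le_trans (le_iSup (fun i : s => G (t i) i) i)
      (le_iSup (fun t : T => ⨆ i : s, G (t.1 i) i) ⟨t, ht⟩)
  let g : M →ₗ[PathAlg k Q] U := (Submodule.liftQ _ f' hker) ∘ₗ
    (f.quotKerEquivOfSurjective hfs).symm.toLinearMap
  have hg : ∀ y, g (f y) = f' y := fun y => by
    have : (f.quotKerEquivOfSurjective hfs).symm (f y) = Submodule.Quotient.mk y := by
      rw [LinearEquiv.symm_apply_eq]; rfl
    simp only [g, LinearMap.comp_apply, LinearEquiv.coe_coe, this, Submodule.liftQ_apply]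
  have hgs : ∀ i : s, (g i : M) = i := fun i => by
    have h1 : f (Finsupp.single i 1) = i := by simp [f]
    have h2 : f' (Finsupp.single i 1) = ⟨i, hsU i⟩ := by simp [f']
    rw [← h1, hg, h2, h1]
  obtain ⟨hnt, hsimple⟩ := hS
  have hinj : LinearMap.ker g = ⊥ := by
    rw [eq_bot_iff]
    intro x hx
    rw [Submodule.mem_bot]
    by_contra hx0
    have hfp := fp_of_fg hM (Submodule.span _ {x}) (Submodule.fg_span_singleton x)
    rcases hsimple _ hfp with h | h
    · exact hx0 (Submodule.span_singleton_eq_bot.mp h)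
    · have htop : LinearMap.ker g = ⊤ := by
        rw [eq_top_iff, ← h, Submodule.span_singleton_le_iff_mem]; exact hx
      have : (⊤ : Submodule (PathAlg k Q) M) = ⊥ := by
        rw [← hs, Submodule.span_eq_bot]
        intro i hi
        have h0 : g i = 0 := by
          have : i ∈ LinearMap.ker g := htop ▸ Submodule.mem_top
          exact this
        have := hgs ⟨i, hi⟩
        simp only [h0] at this
        exact this.symm
      exact top_ne_bot this
  exact FiniteDimensional.of_injective (g.restrictScalars k) 
    (fun x y hxy => LinearMap.ker_eq_bot.mp hinj hxy)

theorem fp_quotient {R M : Type} [Ring R] [AddCommGroup M] [Module R M]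
    (A B : Submodule R M) (hAB : A ≤ B) (hA : Module.FinitePresentation R A)
    (hB : Module.FinitePresentation R B) :
    Module.FinitePresentation R (B ⧸ A.comap B.subtype) := by
  refine Module.finitePresentation_of_surjective (A.comap B.subtype).mkQ
    (Submodule.mkQ_surjective _) ?_
  rw [Submodule.ker_mkQ]
  refine Submodule.fg_of_fg_map_injective B.subtype (Submodule.subtype_injective _) ?_
  rw [Submodule.map_comap_subtype, inf_eq_right.mpr hAB]
  exact Module.Finite.iff_fg.mp inferInstance

theorem finiteDimensional_of_series {k : Type} [Field k] {Q : FinQuiver} {M : Type}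
    [AddCommGroup M] [Module (PathAlg k Q) M] [Module k M] [IsScalarTower k (PathAlg k Q) M]
    (ℓ : ℕ) (c : Fin (ℓ + 1) → Submodule (PathAlg k Q) M) (hc : IsFpCompSeries ℓ c) :
    FiniteDimensional k M := by
  obtain ⟨h0, hl, hfp, hstep⟩ := hc
  have key : ∀ i, FiniteDimensional k (c i) := by
    intro i
    induction i using Fin.induction with
    | zero =>
      rw [h0]
      exact inferInstanceAs (FiniteDimensional k (⊥ : Submodule k M))
    | succ i ih =>
      obtain ⟨hlt, hs⟩ := hstep i
      have hq := finiteDimensional_of_fpSimple (k := k)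
        (fp_quotient _ _ hlt.le (hfp i.castSucc) (hfp i.succ)) hs
      let N : Submodule k (c i.succ) :=
        (Submodule.comap (c i.succ).subtype (c i.castSucc)).restrictScalars k
      have hN : FiniteDimensional k N := by
        let g : N →ₗ[k] c i.castSucc :=
          { toFun := fun x => ⟨x.1.1, x.2⟩
            map_add' := fun _ _ => rfl
            map_smul' := fun _ _ => rfl }
        refine FiniteDimensional.of_injective g ?_
        intro x y hxy
        have := congrArg Subtype.val hxy
        exact Subtype.ext (Subtype.ext this)
      have hq' : FiniteDimensional k (c i.succ ⧸ N) := hq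
      exact Module.Finite.of_submodule_quotient N
  have := key (Fin.last ℓ)
  rw [hl] at this
  exact Module.Finite.of_surjective
    ((⊤ : Submodule (PathAlg k Q) M).subtype.restrictScalars k) (fun x => ⟨⟨x, trivial⟩, rfl⟩)

theorem exists_series {k : Type} [Field k] {Q : FinQuiver} {M : Type}
    [AddCommGroup M] [Module (PathAlg k Q) M] [Module k M] [IsScalarTower k (PathAlg k Q) M]
    [FiniteDimensional k M] :
    ∃ (ℓ : ℕ) (c : Fin (ℓ + 1) → Submodule (PathAlg k Q) M), IsFpCompSeries ℓ c := by
  have : IsNoetherian (PathAlg k Q) M := isNoetherian_of_tower k inferInstance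
  have : IsArtinian (PathAlg k Q) M := isArtinian_of_tower k inferInstance
  obtain ⟨s, hs0, hs1⟩ := exists_compositionSeries_of_isNoetherian_isArtinian (PathAlg k Q) M
  refine ⟨s.length, s.toFun, hs0, hs1, fun i => ?_, fun i => ?_⟩
  · have : FiniteDimensional k (s.toFun i) :=
      inferInstanceAs (FiniteDimensional k ((s.toFun i).restrictScalars k))
    exact fp_of_finiteDimensional (k := k)
  · have hcov : s.toFun i.castSucc ⋖ s.toFun i.succ := s.step i
    have hsim := (covBy_iff_quot_is_simple hcov.le).mp hcov
    refine ⟨hcov.lt, ?_, fun N _ => ?_⟩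
    · exact IsSimpleModule.nontrivial (PathAlg k Q) _
    · exact eq_bot_or_eq_top N

end Helpers

end LPA

open LPA in
/-- Let `R = P_k(Ē)`.  The category of finite-dimensional left `R`-modules
coincides with the category of finite-length objects of `fp(R)`:
(a) every finite-dimensional left `R`-module is finitely presented;
(b) every simple object of `fp(R)` is finite-dimensional over `k`;
(c) a finitely presented left `R`-module is finite-dimensional over `k` if and only if it has
a composition series in `fp(R)`. -/
theorem statement_10 (k : Type) [Field k] (Q : FinQuiver) :
    (∀ (M : Type) [AddCommGroup M] [Module (PathAlg k Q.rev) M] [Module k M]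
        [IsScalarTower k (PathAlg k Q.rev) M],
        FiniteDimensional k M → Module.FinitePresentation (PathAlg k Q.rev) M) ∧
    (∀ (M : Type) [AddCommGroup M] [Module (PathAlg k Q.rev) M] [Module k M]
        [IsScalarTower k (PathAlg k Q.rev) M],
        Module.FinitePresentation (PathAlg k Q.rev) M → FpSimple (PathAlg k Q.rev) M →
          FiniteDimensional k M) ∧
    (∀ (M : Type) [AddCommGroup M] [Module (PathAlg k Q.rev) M] [Module k M]
        [IsScalarTower k (PathAlg k Q.rev) M],
        Module.FinitePresentation (PathAlg k Q.rev) M →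
        (FiniteDimensional k M ↔
          ∃ (ℓ : ℕ) (c : Fin (ℓ + 1) → Submodule (PathAlg k Q.rev) M),
            IsFpCompSeries ℓ c)) := by
  refine ⟨?_, ?_, ?_⟩
  · intro M _ _ _ _ h
    exact fp_of_finiteDimensional (k := k)
  · intro M _ _ _ _ h hS
    exact finiteDimensional_of_fpSimple h hS
  · intro M _ _ _ _ _
    exact ⟨fun _ => exists_series, fun ⟨ℓ, c, hc⟩ => finiteDimensional_of_series ℓ c hc⟩
end
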